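/- Let A be a separable unital C*-algebra of stable rank one and let k ∈ ℕ with k ≥ 1. Then A has no nonzero representation of dimension less than k if and only if there exists a *-homomorphism φ : M_k(C_0((0,1])) → A whose range generates A as a closed two-sided ideal (i.e., φ has full range). -/

import Mathlib

open ZeroAtInfty

/-!
A homomorphism from `M_k(B)` into `M_j(ℂ)` with `j < k` vanishes, because the images of the entries
of one column are `k` matrices of equal absolute value with mutually orthogonal ranges in `ℂ^j`.
Hence a homomorphism from `M_k(C₀((0,1]))` with full range excludes representations of dimension
less than `k`.

For the converse, let `M` be a maximal ideal. If `A ⧸ M` does not contain `k` mutually orthogonal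
nonzero positive elements, then it contains a minimal projection `p`, and the GNS construction for
the state `φ` given by `p x p ≡ φ(x) p` is a representation of dimension less than `k`. So without
such representations the unit has rank at least `k` in every simple quotient. This is an open
condition on the quasi-compact space of maximal ideals, and finitely many local witnesses are glued
by stable rank one: for a generic choice of `u` and `v` the element `d₂ + (d₁ u + d₂ v) d₁`
generates both `(d₁⋆d₁ - ε)₊` and `(d₂⋆d₂ - ε)₊`, and there is a unit that agrees with a given `S`
on `(S⋆S - ε)₊`, which moves one splitting into a position orthogonal to the remainder of another.
The outcome is `v₁, …, v_k` with `v_i⋆ v_j = δ_ij h` for a positive element `h` with `(h - ε)₊`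
full, and `X ↦ ∑ v_i (X_ij((h - ε)₊) h⁻¹) v_j⋆` is the required homomorphism.
-/

open Filter Topology Set

section Cutoffs

/-- The cutoff `t ↦ (t - ε)₊`. -/
noncomputable def cutDown (ε t : ℝ) : ℝ := max (t - ε) 0

/-- The truncated inverse `t ↦ 1 / max t ε`; for `ε > 0` it is continuous and equals `1 / t` on
`[ε, ∞)`. -/
noncomputable def truncInv (ε t : ℝ) : ℝ := (max t ε)⁻¹

/-- The function `t ↦ (t - ε)₊ / max t ε`. It vanishes on `[0, ε]` and tends to `1` pointwise on
`(0, ∞)` as `ε → 0`, so that applied to a positive element it gives an approximate unit of the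
hereditary subalgebra generated by that element. -/
noncomputable def approxUnit (ε t : ℝ) : ℝ := cutDown ε t * truncInv ε t

variable {ε : ℝ}

@[fun_prop]
lemma continuous_cutDown (ε : ℝ) : Continuous (cutDown ε) := by
  unfold cutDown; fun_prop

lemma continuous_truncInv (hε : 0 < ε) : Continuous (truncInv ε) :=
  (continuous_id.max continuous_const).inv₀ fun t => (hε.trans_le (le_max_right t ε)).ne'

lemma continuous_approxUnit (hε : 0 < ε) : Continuous (approxUnit ε) :=
  (continuous_cutDown ε).mul (continuous_truncInv hε)

lemma cutDown_nonneg (ε t : ℝ) : 0 ≤ cutDown ε t := le_max_right _ _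

lemma truncInv_pos (hε : 0 < ε) (t : ℝ) : 0 < truncInv ε t :=
  inv_pos.2 (hε.trans_le (le_max_right _ _))

lemma cutDown_of_le {t : ℝ} (h : t ≤ ε) : cutDown ε t = 0 := max_eq_right (by linarith)

lemma cutDown_of_ge {t : ℝ} (h : ε ≤ t) : cutDown ε t = t - ε := max_eq_left (by linarith)

lemma truncInv_mul_self {t : ℝ} (hε : 0 < ε) (h : ε ≤ t) : truncInv ε t * t = 1 := by
  rw [truncInv, max_eq_left h, inv_mul_cancel₀ (hε.trans_le h).ne']

lemma truncInv_mul_self_mul_cutDown (hε : 0 < ε) (t : ℝ) :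
    truncInv ε t * t * cutDown ε t = cutDown ε t := by
  rcases le_total t ε with h | h
  · simp [cutDown_of_le h]
  · rw [truncInv_mul_self hε h, one_mul]

lemma mul_one_sub_approxUnit_sq_le (hε : 0 < ε) (t : ℝ) :
    t * ((1 - approxUnit ε t) * (1 - approxUnit ε t)) ≤ ε := by
  rcases le_total t ε with h | h
  · simpa [approxUnit, cutDown_of_le h] using h
  · have ht' : 0 < t := hε.trans_le h
    have : t * ((1 - approxUnit ε t) * (1 - approxUnit ε t)) = ε * (ε / t) := by
      rw [approxUnit, cutDown_of_ge h, truncInv, max_eq_left h]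
      field_simp
      ring
    rw [this]
    exact mul_le_of_le_one_right hε.le ((div_le_one ht').2 h)

end Cutoffs

section FunctionalCalculus

variable {A : Type*} [CStarAlgebra A]

lemma star_cfc (f : ℝ → ℝ) (a : A) : star (cfc f a) = cfc f a :=
  (cfc_predicate (p := IsSelfAdjoint) f a).star_eq

lemma cfc_mul_cfc {f g : ℝ → ℝ} (hf : Continuous f) (hg : Continuous g) (a : A) :
    cfc f a * cfc g a = cfc (fun t => f t * g t) a :=
  (cfc_mul f g a hf.continuousOn hg.continuousOn).symm

lemma cfc_mul_self {f : ℝ → ℝ} (hf : Continuous f) {a : A} (ha : IsSelfAdjoint a) :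
    cfc f a * a = cfc (fun t => f t * t) a := by
  rw [cfc_mul f _ a hf.continuousOn, cfc_id' ℝ a]

lemma self_mul_cfc {f : ℝ → ℝ} (hf : Continuous f) {a : A} (ha : IsSelfAdjoint a) :
    a * cfc f a = cfc (fun t => t * f t) a := by
  rw [cfc_mul (fun t => t) f a continuousOn_id hf.continuousOn, cfc_id' ℝ a]

lemma one_sub_cfc {f : ℝ → ℝ} (hf : Continuous f) {a : A} (ha : IsSelfAdjoint a) :
    1 - cfc f a = cfc (fun t => 1 - f t) a := by
  rw [cfc_sub _ f a continuousOn_const hf.continuousOn, cfc_const_one ℝ a]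

variable {ε : ℝ}

lemma cfc_truncInv_mul_self_mul_cfc_cutDown (hε : 0 < ε) {a : A} (ha : IsSelfAdjoint a) :
    cfc (truncInv ε) a * a * cfc (cutDown ε) a = cfc (cutDown ε) a := by
  have hcont := continuous_truncInv hε
  rw [cfc_mul_self hcont ha, cfc_mul_cfc (by fun_prop) (by fun_prop)]
  simp only [truncInv_mul_self_mul_cutDown hε]

lemma cfc_cutDown_mul_cfc_truncInv_mul_self (hε : 0 < ε) {a : A} (ha : IsSelfAdjoint a) :
    cfc (cutDown ε) a * cfc (truncInv ε) a * a = cfc (cutDown ε) a := by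
  have hcont := continuous_truncInv hε
  rw [mul_assoc, cfc_mul_self hcont ha, cfc_mul_cfc (by fun_prop) (by fun_prop)]
  simp only [mul_comm (cutDown ε _), truncInv_mul_self_mul_cutDown hε]

lemma self_mul_cfc_truncInv_mul_cfc_cutDown (hε : 0 < ε) {a : A} (ha : IsSelfAdjoint a) :
    a * cfc (truncInv ε) a * cfc (cutDown ε) a = cfc (cutDown ε) a := by
  simpa only [star_mul, star_cfc, ha.star_eq, mul_assoc] using
    congrArg star (cfc_cutDown_mul_cfc_truncInv_mul_self hε ha)

end FunctionalCalculus

section ApproximateUnit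

variable {A : Type*} [CStarAlgebra A] [PartialOrder A] [StarOrderedRing A] {b y : A}

lemma norm_mul_one_sub_cfc_approxUnit_sq_le {C ε : ℝ} (hy : 0 ≤ y) (h : star b * b ≤ C • y)
    (hε : 0 < ε) : ‖b * (1 - cfc (approxUnit ε) y)‖ ^ 2 ≤ |C| * ε := by
  have hsa : IsSelfAdjoint y := .of_nonneg hy
  have hcont := continuous_approxUnit hε
  set w := cfc (fun t => 1 - approxUnit ε t) y with hw
  have hsw : star w = w := star_cfc _ _
  have hconj : star w * (star b * b) * w ≤ C • (star w * y * w) := by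
    simpa using star_left_conjugate_le_conjugate h w
  have hwyw : star w * y * w = cfc
      (fun t => t * ((1 - approxUnit ε t) * (1 - approxUnit ε t))) y := by
    rw [hsw, hw, cfc_mul_self (by fun_prop) hsa, cfc_mul_cfc (by fun_prop) (by fun_prop)]
    congr 1; ext t; ring
  have hnorm : ‖star w * y * w‖ ≤ ε := by
    rw [hwyw]
    refine norm_cfc_le hε.le fun t ht => ?_
    have ht0 : 0 ≤ t := spectrum_nonneg_of_nonneg hy ht
    rw [Real.norm_of_nonneg (mul_nonneg ht0 (mul_self_nonneg _))]
    exact mul_one_sub_approxUnit_sq_le hε t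
  rw [one_sub_cfc hcont hsa, ← hw, pow_two, ← CStarRing.norm_star_mul_self]
  calc ‖star (b * w) * (b * w)‖ = ‖star w * (star b * b) * w‖ := by
        rw [star_mul]; simp only [mul_assoc]
    _ ≤ ‖C • (star w * y * w)‖ := CStarAlgebra.norm_le_norm_of_nonneg_of_le
        (star_left_conjugate_nonneg (star_mul_self_nonneg b) w) hconj
    _ ≤ |C| * ε := by rw [norm_smul, Real.norm_eq_abs]; gcongr

lemma tendsto_mul_cfc_approxUnit {C : ℝ} (hy : 0 ≤ y) (h : star b * b ≤ C • y) :
    Tendsto (fun ε => b * cfc (approxUnit ε) y) (𝓝[>] 0) (𝓝 b) := by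
  rw [tendsto_iff_norm_sub_tendsto_zero]
  have hlim : Tendsto (fun ε : ℝ => √(|C| * ε)) (𝓝[>] 0) (𝓝 0) := by
    have : Continuous fun ε : ℝ => √(|C| * ε) := by fun_prop
    simpa using (this.tendsto 0).mono_left nhdsWithin_le_nhds
  refine squeeze_zero' (.of_forall fun _ => norm_nonneg _) ?_ hlim
  filter_upwards [self_mem_nhdsWithin] with ε hε
  rw [norm_sub_rev]
  refine Real.le_sqrt_of_sq_le ?_
  simpa [mul_sub] using norm_mul_one_sub_cfc_approxUnit_sq_le hy h hε

end ApproximateUnit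

section ClosedIdeals

lemma smul_mem_twoSidedIdeal {R A : Type*} [CommSemiring R] [Ring A] [Algebra R A]
    (I : TwoSidedIdeal A) (c : R) {x : A} (hx : x ∈ I) : c • x ∈ I := by
  rw [Algebra.smul_def]; exact I.mul_mem_left _ _ hx

variable {A : Type*} [CStarAlgebra A] {I : TwoSidedIdeal A}

lemma cfc_cutDown_mem {ε : ℝ} (hε : 0 < ε) {a : A} (ha : IsSelfAdjoint a) (hI : a ∈ I) :
    cfc (cutDown ε) a ∈ I := by
  rw [← cfc_cutDown_mul_cfc_truncInv_mul_self hε ha]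
  exact I.mul_mem_left _ _ hI

lemma cfc_approxUnit_mem {ε : ℝ} (hε : 0 < ε) {a : A} (h : cfc (cutDown ε) a ∈ I) :
    cfc (approxUnit ε) a ∈ I := by
  have : cfc (approxUnit ε) a = cfc (cutDown ε) a * cfc (truncInv ε) a :=
    (cfc_mul_cfc (continuous_cutDown ε) (continuous_truncInv hε) a).symm
  rw [this]
  exact I.mul_mem_right _ _ h

-- If `f t - f c = g t * (t - c)`, then `f a * x - f c • x = g a * (a * x - c • x)`.
lemma cfc_mul_sub_smul_mem {f g : ℝ → ℝ} {c : ℝ} (hf : Continuous f) (hg : Continuous g)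
    (hfg : ∀ t, f t - f c = g t * (t - c)) {a x : A} (ha : IsSelfAdjoint a)
    (h : a * x - c • x ∈ I) : cfc f a * x - f c • x ∈ I := by
  have hfactor : cfc f a - algebraMap ℝ A (f c) = cfc g a * (a - algebraMap ℝ A c) := by
    rw [← cfc_const (f c) a ha, ← cfc_sub f _ a hf.continuousOn continuousOn_const]
    simp only [hfg]
    rw [cfc_mul g _ a hg.continuousOn (by fun_prop),
      cfc_sub (fun t => t) _ a continuousOn_id continuousOn_const, cfc_id' ℝ a, cfc_const c a ha]
  rw [Algebra.smul_def, ← sub_mul, hfactor, mul_assoc, sub_mul, ← Algebra.smul_def]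
  exact I.mul_mem_left _ _ h

variable [PartialOrder A] [StarOrderedRing A] {b x y : A}

lemma mem_of_forall_cfc_cutDown_mem (hI : IsClosed (I : Set A)) (hy : 0 ≤ y)
    (hcut : ∀ ε > 0, cfc (cutDown ε) y ∈ I) {C : ℝ} (h : star b * b ≤ C • y) : b ∈ I :=
  hI.mem_of_tendsto (tendsto_mul_cfc_approxUnit hy h) <| by
    filter_upwards [self_mem_nhdsWithin] with ε hε
    exact I.mul_mem_left _ _ (cfc_approxUnit_mem hε (hcut ε hε))

lemma mem_of_star_mul_self_le (hI : IsClosed (I : Set A)) (hy : y ∈ I) (h : star b * b ≤ y) :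
    b ∈ I := by
  have hy0 : 0 ≤ y := (star_mul_self_nonneg b).trans h
  refine mem_of_forall_cfc_cutDown_mem hI hy0 (fun ε hε => ?_) (C := 1) (by rwa [one_smul])
  exact cfc_cutDown_mem hε (.of_nonneg hy0) hy

lemma mem_of_star_mul_self_mem (hI : IsClosed (I : Set A)) (h : star b * b ∈ I) : b ∈ I :=
  mem_of_star_mul_self_le hI h le_rfl

lemma star_mem_of_mem (hI : IsClosed (I : Set A)) (h : b ∈ I) : star b ∈ I :=
  mem_of_star_mul_self_mem hI (by rw [star_star]; exact I.mul_mem_right _ _ h)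

lemma mem_of_nonneg_of_le (hI : IsClosed (I : Set A)) (hx : 0 ≤ x) (hxy : x ≤ y) (hy : y ∈ I) :
    x ∈ I := by
  have hsqrt : star (CFC.sqrt x) * CFC.sqrt x = x := by
    rw [(CFC.sqrt_nonneg x).isSelfAdjoint.star_eq, CFC.sqrt_mul_sqrt_self x]
  rw [← hsqrt]
  exact I.mul_mem_left _ _ (mem_of_star_mul_self_le hI hy (hsqrt.trans_le hxy))

lemma exists_cfc_cutDown_star_mul_self_notMem (hI : IsClosed (I : Set A)) (hb : b ∉ I) :
    ∃ ε > 0, cfc (cutDown ε) (star b * b) ∉ I := by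
  by_contra! hcut
  exact hb (mem_of_forall_cfc_cutDown_mem hI (star_mul_self_nonneg b) hcut (C := 1)
    (by rw [one_smul]))

end ClosedIdeals

section MaximalIdeals

lemma exists_finset_mem_span {R : Type*} [NonUnitalRing R] {s : Set R} {x : R}
    (hx : x ∈ TwoSidedIdeal.span s) :
    ∃ F : Finset R, (F : Set R) ⊆ s ∧ x ∈ TwoSidedIdeal.span (F : Set R) := by
  classical
  induction hx using TwoSidedIdeal.span_induction with
  | mem x h => exact ⟨{x}, by simpa using h, TwoSidedIdeal.subset_span (by simp)⟩
  | zero => exact ⟨∅, by simp, TwoSidedIdeal.zero_mem _⟩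
  | add x y _ _ hx hy =>
    obtain ⟨F, hFs, hxF⟩ := hx
    obtain ⟨G, hGs, hyG⟩ := hy
    refine ⟨F ∪ G, by simp [hFs, hGs], TwoSidedIdeal.add_mem _ ?_ ?_⟩
    · exact TwoSidedIdeal.span_mono (by simp) hxF
    · exact TwoSidedIdeal.span_mono (by simp) hyG
  | neg x _ h => exact h.imp fun F hF => ⟨hF.1, TwoSidedIdeal.neg_mem _ hF.2⟩
  | left_absorb a x _ h =>
    exact h.imp fun F hF => ⟨hF.1, TwoSidedIdeal.mul_mem_left _ _ _ hF.2⟩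
  | right_absorb a x _ h =>
    exact h.imp fun F hF => ⟨hF.1, TwoSidedIdeal.mul_mem_right _ _ _ hF.2⟩

variable {A : Type*} [Ring A]

lemma isCompactElement_top_twoSidedIdeal : IsCompactElement (⊤ : TwoSidedIdeal A) := by
  rw [CompleteLattice.isCompactElement_iff_le_of_directed_sSup_le]
  intro s hs hdir hle
  have hone : (1 : A) ∈ TwoSidedIdeal.span (⋃ I ∈ s, (I : Set A)) := by
    have hsub : ∀ I ∈ s, I ≤ TwoSidedIdeal.span (⋃ I ∈ s, (I : Set A)) := fun I hI x hx =>
      TwoSidedIdeal.subset_span (mem_biUnion hI hx)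
    exact (hle.trans (sSup_le hsub)) (TwoSidedIdeal.mem_top A)
  obtain ⟨F, hFs, hF⟩ := exists_finset_mem_span hone
  obtain ⟨I, hI, hFI⟩ := hdir.exists_mem_subset_of_finset_subset_biUnion hs hFs
  exact ⟨I, hI, (I.eq_top (TwoSidedIdeal.span_le.2 hFI hF)).ge⟩

/-- The maximal proper two-sided ideals of a ring. -/
def MaximalTwoSidedIdeal (A : Type*) [Ring A] : Type _ :=
  {M : TwoSidedIdeal A // IsCoatom M}

lemma MaximalTwoSidedIdeal.one_notMem (M : MaximalTwoSidedIdeal A) : (1 : A) ∉ M.1 :=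
  fun h => M.2.1 (M.1.eq_top h)

lemma MaximalTwoSidedIdeal.eq_of_le (M : MaximalTwoSidedIdeal A) {J : TwoSidedIdeal A}
    (hMJ : M.1 ≤ J) (hJ : (1 : A) ∉ J) : J = M.1 :=
  (M.2.le_iff_eq (mt J.one_mem hJ)).1 hMJ

lemma exists_maximalTwoSidedIdeal_ge {I : TwoSidedIdeal A} (h : (1 : A) ∉ I) :
    ∃ M : MaximalTwoSidedIdeal A, I ≤ M.1 := by
  have := CompleteLattice.coatomic_of_top_compact (isCompactElement_top_twoSidedIdeal (A := A))
  obtain hI | ⟨M, hM, hIM⟩ := eq_top_or_exists_le_coatom I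
  · exact absurd (I.one_mem hI) h
  · exact ⟨⟨M, hM⟩, hIM⟩

lemma one_mem_span_of_forall_exists_notMem {s : Set A}
    (h : ∀ M : MaximalTwoSidedIdeal A, ∃ y ∈ s, y ∉ M.1) : (1 : A) ∈ TwoSidedIdeal.span s := by
  by_contra hone
  obtain ⟨M, hM⟩ := exists_maximalTwoSidedIdeal_ge hone
  obtain ⟨y, hys, hyM⟩ := h M
  exact hyM (hM (TwoSidedIdeal.subset_span hys))

lemma MaximalTwoSidedIdeal.exists_mul_mul_notMem (M : MaximalTwoSidedIdeal A) {a b : A}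
    (ha : a ∉ M.1) (hb : b ∉ M.1) : ∃ x, a * x * b ∉ M.1 := by
  by_contra! hcon
  let J : TwoSidedIdeal A := .mk' {y | ∀ x, y * x * b ∈ M.1}
    (fun x => by simp [M.1.zero_mem])
    (fun hy hz x => by rw [add_mul, add_mul]; exact M.1.add_mem (hy x) (hz x))
    (fun hy x => by rw [neg_mul, neg_mul]; exact M.1.neg_mem (hy x))
    (fun {y z} hz x => by
      rw [mul_assoc, mul_assoc y, ← mul_assoc z]; exact M.1.mul_mem_left _ _ (hz x))
    (fun {y z} hy x => by rw [mul_assoc y]; exact hy (z * x))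
  have mem_J : ∀ y, y ∈ J ↔ ∀ x, y * x * b ∈ M.1 := fun y => by
    simp only [J, TwoSidedIdeal.mem_mk', mem_ofPred_eq]
  have hMJ : M.1 ≤ J := fun y hy =>
    (mem_J y).2 fun x => M.1.mul_mem_right _ _ (M.1.mul_mem_right _ _ hy)
  have hone : (1 : A) ∉ J := fun h => hb (by simpa using (mem_J 1).1 h 1)
  exact ha (M.eq_of_le hMJ hone ▸ (mem_J a).2 hcon)

/-- The hull-kernel topology. -/
instance : TopologicalSpace (MaximalTwoSidedIdeal A) :=
  .generateFrom (range fun y : A => {M | y ∉ M.1})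

lemma isOpen_setOf_notMem (y : A) : IsOpen {M : MaximalTwoSidedIdeal A | y ∉ M.1} :=
  TopologicalSpace.isOpen_generateFrom_of_mem ⟨y, rfl⟩

instance : CompactSpace (MaximalTwoSidedIdeal A) := by
  refine ⟨isCompact_generateFrom rfl fun P hP hcov => ?_⟩
  have hone : (1 : A) ∈ TwoSidedIdeal.span {y : A | {M | y ∉ M.1} ∈ P} := by
    refine one_mem_span_of_forall_exists_notMem fun M => ?_
    obtain ⟨U, hU, hMU⟩ := hcov (mem_univ M)
    obtain ⟨y, rfl⟩ := hP hU
    exact ⟨y, hU, hMU⟩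
  obtain ⟨F, hFP, hF⟩ := exists_finset_mem_span hone
  refine ⟨(fun y => {M | y ∉ M.1}) '' F, image_subset_iff.2 hFP, F.finite_toSet.image _,
    fun M _ => ?_⟩
  by_contra hM
  have hFM : (F : Set A) ⊆ M.1 := fun y hy => by
    by_contra hyM
    exact hM ⟨_, ⟨y, hy, rfl⟩, hyM⟩
  exact M.one_notMem (TwoSidedIdeal.span_le.2 hFM hF)

lemma exists_forall_mem_of_antitone {X : Type*} [TopologicalSpace X] {K : Set X}
    (hK : IsCompact K) {U : ℝ → Set X} (hopen : ∀ ε > 0, IsOpen (U ε))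
    (hanti : ∀ ε δ, 0 < δ → δ < ε → U ε ⊆ U δ) (hcov : ∀ x ∈ K, ∃ ε > 0, x ∈ U ε) :
    ∃ ε > 0, K ⊆ U ε := by
  obtain ⟨n, hn⟩ := hK.elim_directed_cover
    (fun n : ℕ => U (1 / ((n : ℝ) + 1))) (fun n => hopen _ (by positivity))
    (fun x hxK => by
      obtain ⟨ε, hε, hx⟩ := hcov x hxK
      obtain ⟨n, hn⟩ := exists_nat_one_div_lt hε
      exact mem_iUnion.2 ⟨n, hanti _ _ (by positivity) hn hx⟩)
    (Monotone.directed_le <| monotone_nat_of_le_succ fun n =>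
      hanti _ _ (by positivity) (one_div_lt_one_div_of_lt (by positivity) (by push_cast; linarith)))
  exact ⟨_, by positivity, hn⟩

end MaximalIdeals

section ClosedMaximalIdeals

variable {A : Type*} [NormedRing A] [HasSummableGeomSeries A]

lemma one_notMem_closure {I : TwoSidedIdeal A} (h : (1 : A) ∉ I) :
    (1 : A) ∉ closure (I : Set A) := by
  rw [mem_closure_iff]
  intro hcl
  obtain ⟨_, ⟨u, rfl⟩, hu⟩ := hcl {a | IsUnit a} Units.isOpen isUnit_one
  exact h (by simpa using I.mul_mem_left (↑u⁻¹ : A) _ hu)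

/-- The closure of a two-sided ideal of a normed ring. -/
def closureTwoSidedIdeal {A : Type*} [NormedRing A] (I : TwoSidedIdeal A) : TwoSidedIdeal A :=
  .mk' (closure (I : Set A)) (subset_closure I.zero_mem)
    (fun hx hy => map_mem_closure₂ continuous_add hx hy fun _ ha _ hb => I.add_mem ha hb)
    (fun hx => map_mem_closure continuous_neg hx fun _ ha => I.neg_mem ha)
    (fun {x _} hy => map_mem_closure (f := (x * ·)) (by fun_prop) hy
      fun _ ha => I.mul_mem_left x _ ha)
    (fun {_ y} hx => map_mem_closure (f := (· * y)) (by fun_prop) hx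
      fun _ ha => I.mul_mem_right _ y ha)

lemma MaximalTwoSidedIdeal.isClosed (M : MaximalTwoSidedIdeal A) : IsClosed (M.1 : Set A) := by
  have heq : closureTwoSidedIdeal M.1 = M.1 := M.eq_of_le
    (fun x hx => by simpa [closureTwoSidedIdeal] using subset_closure hx)
    (by simpa [closureTwoSidedIdeal] using one_notMem_closure M.one_notMem)
  rw [← heq, closureTwoSidedIdeal, TwoSidedIdeal.coe_mk']
  exact isClosed_closure

end ClosedMaximalIdeals

section StableRankOne

-- For a unit `u` and units `t` tending to `u⁻¹ + p`, the elements `q = (t - p)⁻¹` tend to `u` and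
-- satisfy `1 + q * p = q * t`.
lemma dense_setOf_isUnit_one_add_mul {A : Type*} [NormedRing A] [HasSummableGeomSeries A]
    (hsr1 : Dense {a : A | IsUnit a}) (p : A) : Dense {q : A | IsUnit (1 + q * p)} := by
  refine dense_closure.1 (hsr1.mono ?_)
  rintro _ ⟨u, rfl⟩
  have hsub : Tendsto (fun t : A => t - p) (𝓝 (↑u⁻¹ + p)) (𝓝 ↑u⁻¹) := by
    have : Continuous fun t : A => t - p := by fun_prop
    simpa using this.tendsto (↑u⁻¹ + p)
  have hinv : Tendsto (fun t : A => Ring.inverse (t - p)) (𝓝 (↑u⁻¹ + p)) (𝓝 ↑u) := by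
    simpa [Function.comp_def] using (NormedRing.inverse_continuousAt u⁻¹).tendsto.comp hsub
  have hfreq : ∃ᶠ t in 𝓝 ((↑u⁻¹ : A) + p), IsUnit t := mem_closure_iff_frequently.1 (hsr1 _)
  refine mem_closure_of_frequently_of_tendsto ?_ hinv
  refine (hfreq.and_eventually (hsub.eventually (Units.nhds u⁻¹))).mono fun t ht => ?_
  obtain ⟨ht, w, hw⟩ := ht
  have hmul : 1 + Ring.inverse (t - p) * p = ↑w⁻¹ * t := by
    rw [← hw, Ring.inverse_unit, ← w.inv_mul, ← mul_add, hw, sub_add_cancel]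
  simpa only [mem_ofPred_eq, hmul] using w⁻¹.isUnit.mul ht

variable {A : Type*} [CStarAlgebra A]

lemma exists_isUnit_one_add_mul_and (hsr1 : Dense {a : A | IsUnit a}) (p q : A) {f : A → A}
    (hf : Continuous f) (hf0 : f 0 = 0) : ∃ ρ, IsUnit (1 + (q + ρ) * p) ∧ IsUnit (1 + f ρ) := by
  have hcont : Continuous fun q' => 1 + f (q' - q) := by fun_prop
  obtain ⟨q', hq', hunit⟩ := (dense_setOf_isUnit_one_add_mul hsr1 p).inter_open_nonempty _
    (Units.isOpen.preimage hcont) ⟨q, by simp [hf0]⟩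
  exact ⟨q' - q, by simpa using hunit, hq'⟩

/-- A left inverse of `S` on the range of `(S⋆S - ε)₊`. -/
noncomputable def truncLeftInv (ε : ℝ) (S : A) : A := cfc (truncInv ε) (star S * S) * star S

variable {ε : ℝ}

lemma truncLeftInv_mul_mul_cfc_cutDown (hε : 0 < ε) (S : A) :
    truncLeftInv ε S * S * cfc (cutDown ε) (star S * S) = cfc (cutDown ε) (star S * S) := by
  rw [truncLeftInv, mul_assoc _ (star S),
    cfc_truncInv_mul_self_mul_cfc_cutDown hε (.star_mul_self S)]

lemma cfc_cutDown_mul_truncLeftInv_mul (hε : 0 < ε) (S : A) :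
    cfc (cutDown ε) (star S * S) * (truncLeftInv ε S * S) = cfc (cutDown ε) (star S * S) := by
  rw [truncLeftInv, mul_assoc _ (star S), ← mul_assoc,
    cfc_cutDown_mul_cfc_truncInv_mul_self hε (.star_mul_self S)]

lemma exists_factorization_cfc_cutDown_of_merge (hsr1 : Dense {a : A | IsUnit a}) (d₁ d₂ : A)
    (hε : 0 < ε) :
    ∃ u v : A, (∃ α β, cfc (cutDown ε) (star d₁ * d₁) = α * (d₂ + (d₁ * u + d₂ * v) * d₁) * β) ∧
      (∃ α β, cfc (cutDown ε) (star d₂ * d₂) = α * (d₂ + (d₁ * u + d₂ * v) * d₁) * β) := by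
  set K₁ := truncLeftInv ε d₁
  set K₂ := truncLeftInv ε d₂
  set e₁ := cfc (cutDown ε) (star d₁ * d₁)
  set e₂ := cfc (cutDown ε) (star d₂ * d₂)
  have he₁ : K₁ * d₁ * e₁ = e₁ := truncLeftInv_mul_mul_cfc_cutDown hε d₁
  have he₂ : e₂ * (K₂ * d₂) = e₂ := cfc_cutDown_mul_truncLeftInv_mul hε d₂
  obtain ⟨ρ, ⟨V, hV⟩, ⟨U, hU⟩⟩ := exists_isUnit_one_add_mul_and hsr1 (K₁ * d₁) (K₂ * d₁ - 1)
    (f := fun ρ => K₁ * d₂ * ρ) (by fun_prop) (mul_zero _)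
  set S := d₂ + (d₁ * K₁ + d₂ * ((ρ - 1) * K₁)) * d₁ with hS
  have hleft : K₁ * S * e₁ = U * e₁ := by
    calc K₁ * S * e₁ = K₁ * d₂ * e₁ + (K₁ * d₁ + K₁ * d₂ * (ρ - 1)) * (K₁ * d₁ * e₁) := by
          rw [hS]; noncomm_ring
      _ = K₁ * d₂ * e₁ + (K₁ * d₁ + K₁ * d₂ * (ρ - 1)) * e₁ := by rw [he₁]
      _ = K₁ * d₁ * e₁ + K₁ * d₂ * ρ * e₁ := by noncomm_ring
      _ = U * e₁ := by rw [he₁, hU]; noncomm_ring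
  have hright : e₂ * K₂ * S = e₂ * V := by
    calc e₂ * K₂ * S
        = e₂ * (K₂ * d₂) * (1 + (ρ - 1) * (K₁ * d₁)) + e₂ * (K₂ * d₁ * K₁ * d₁) := by
          rw [hS]; noncomm_ring
      _ = e₂ * V := by rw [he₂, hV]; noncomm_ring
  refine ⟨K₁, (ρ - 1) * K₁, ⟨↑U⁻¹ * K₁, e₁, ?_⟩, ⟨e₂ * K₂, ↑V⁻¹, ?_⟩⟩
  · rw [mul_assoc (↑U⁻¹ : A), mul_assoc (↑U⁻¹ : A), hleft, Units.inv_mul_cancel_left]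
  · rw [hright, Units.mul_inv_cancel_right]

lemma exists_unit_mul_cfc_cutDown_eq (hsr1 : Dense {a : A | IsUnit a}) (S : A) (hε : 0 < ε) :
    ∃ W : Aˣ, (W : A) * cfc (cutDown ε) (star S * S) = S * cfc (cutDown ε) (star S * S) ∧
      ∀ k, S * k = 0 → star S * k = 0 → (W : A) * k = k := by
  set K := truncLeftInv ε S with hK
  set e := cfc (cutDown ε) (star S * S)
  have he : K * S * e = e := truncLeftInv_mul_mul_cfc_cutDown hε S
  obtain ⟨ρ, ⟨V, hV⟩, ⟨U, hU⟩⟩ := exists_isUnit_one_add_mul_and hsr1 (K * S) (S - 1)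
    (f := fun ρ => ρ * K) (by fun_prop) (zero_mul _)
  refine ⟨U⁻¹ * V, ?_, fun k hSk hstarSk => ?_⟩ <;>
    rw [Units.val_mul, mul_assoc, Units.inv_mul_eq_iff_eq_mul, hU, hV]
  · calc (1 + (S - 1 + ρ) * (K * S)) * e = e + (S - 1 + ρ) * (K * S * e) := by noncomm_ring
      _ = S * e + ρ * (K * S * e) := by rw [he]; noncomm_ring
      _ = (1 + ρ * K) * (S * e) := by noncomm_ring
  · have hKk : K * k = 0 := by rw [hK, truncLeftInv, mul_assoc, hstarSk, mul_zero]
    calc (1 + (S - 1 + ρ) * (K * S)) * k = k + (S - 1 + ρ) * K * (S * k) := by noncomm_ring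
      _ = k + ρ * (K * k) := by rw [hSk, hKk]; simp
      _ = (1 + ρ * K) * k := by noncomm_ring

end StableRankOne

section Bumps

/-- A bump function supported on `[c - 1/2, c + 1/2]`, with value `1` at `c`. -/
noncomputable def bump (c t : ℝ) : ℝ := max 0 (1 - 4 * (t - c) ^ 2)

@[fun_prop]
lemma continuous_bump (c : ℝ) : Continuous (bump c) := by unfold bump; fun_prop

lemma bump_self (c : ℝ) : bump c c = 1 := by simp [bump]

lemma bump_sub_bump_self (c t : ℝ) :
    bump c t - bump c c = -4 * (t - c) * (max 1 (4 * (t - c) ^ 2))⁻¹ * (t - c) := by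
  rw [bump_self, bump]
  rcases le_total 1 (4 * (t - c) ^ 2) with h | h
  · rw [max_eq_left (by linarith), max_eq_right h]
    have : t - c ≠ 0 := by rintro h0; norm_num [h0] at h
    field_simp
    ring
  · rw [max_eq_right (by linarith), max_eq_left h]
    ring

lemma abs_sub_lt_of_bump_ne_zero {c t : ℝ} (h : bump c t ≠ 0) : |t - c| < 1 / 2 := by
  contrapose! h
  have : (1 / 2) ^ 2 ≤ (t - c) ^ 2 := by rw [← sq_abs (t - c)]; gcongr
  exact max_eq_left (by linarith)

lemma bump_mul_bump_eq_zero {c c' : ℝ} (h : 1 ≤ |c - c'|) (t : ℝ) : bump c t * bump c' t = 0 := by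
  by_contra! hne
  have hc := abs_lt.1 (abs_sub_lt_of_bump_ne_zero (left_ne_zero_of_mul hne))
  have hc' := abs_lt.1 (abs_sub_lt_of_bump_ne_zero (right_ne_zero_of_mul hne))
  exact absurd (abs_lt.2 ⟨by linarith, by linarith⟩ : |c - c'| < 1) h.not_gt

lemma bump_mul_truncInv_mul_self {c : ℝ} (hc : 1 ≤ c) (t : ℝ) :
    bump c t * truncInv (1 / 2) t * t = bump c t := by
  by_cases h : bump c t = 0
  · simp [h]
  · have := abs_lt.1 (abs_sub_lt_of_bump_ne_zero h)
    rw [mul_assoc, truncInv_mul_self (by norm_num) (by linarith), mul_one]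

end Bumps

section Rank

variable {A : Type*} [CStarAlgebra A]

lemma tendsto_cfc_of_isSelfAdjoint {ι : Type*} {l : Filter ι} {x : ι → A} {a : A} {f : ℝ → ℝ}
    (hf : Continuous f) (hx : Tendsto x l (𝓝 a)) (hsa : ∀ i, IsSelfAdjoint (x i))
    (ha : IsSelfAdjoint a) : Tendsto (fun i => cfc f (x i)) l (𝓝 (cfc f a)) := by
  have hspec : ∀ y : A, ‖y‖ ≤ ‖a‖ + 1 →
      spectrum ℝ y ⊆ Icc (-((‖a‖ + 1) * ‖(1 : A)‖)) ((‖a‖ + 1) * ‖(1 : A)‖) := by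
    intro y hy t ht
    have hle := spectrum.norm_le_norm_mul_of_mem ht
    exact abs_le.1 (hle.trans (by gcongr))
  refine Filter.Tendsto.cfc (𝕜 := ℝ) isCompact_Icc f hx ?_ (.of_forall hsa)
    (hspec a (by linarith)) ha hf.continuousOn
  filter_upwards [hx.norm.eventually_lt_const (lt_add_one ‖a‖)] with i hi
  exact hspec _ hi.le

/-- The image of `d` in the simple quotient `A ⧸ M` has rank at least `m`, witnessed by left
multiples `x i * d` that are pairwise orthogonal already in `A` and nonzero modulo `M`. -/
def RankGE (m : ℕ) (d : A) (M : MaximalTwoSidedIdeal A) : Prop :=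
  ∃ x : Fin m → A, Pairwise (fun i j => x i * d * star (x j * d) = 0) ∧ ∀ i, x i * d ∉ M.1

variable {M : MaximalTwoSidedIdeal A} {m : ℕ} {d : A}

lemma isOpen_setOf_rankGE (m : ℕ) (d : A) : IsOpen {M | RankGE m d M} := by
  simp only [RankGE, ofPred_exists, ofPred_and, ofPred_forall]
  exact isOpen_iUnion fun x => isOpen_const.inter (isOpen_iInter_of_finite fun i =>
    isOpen_setOf_notMem _)

lemma RankGE.of_mul_left {α : A} : RankGE m (α * d) M → RankGE m d M := by
  rintro ⟨x, horth, hM⟩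
  exact ⟨fun i => x i * α, by simpa only [mul_assoc] using horth,
    by simpa only [mul_assoc] using hM⟩

lemma RankGE.cfc_cutDown_mono {a : A} {δ ε : ℝ} (hδε : δ < ε) (h : RankGE m (cfc (cutDown ε) a) M) :
    RankGE m (cfc (cutDown δ) a) M := by
  have hinv := continuous_truncInv (sub_pos.2 hδε)
  have hfactor : cfc (cutDown ε) a
      = cfc (fun t => cutDown ε t * truncInv (ε - δ) (t - δ)) a * cfc (cutDown δ) a := by
    rw [cfc_mul_cfc (by fun_prop) (by fun_prop)]
    congr 1; ext t
    rcases le_total t ε with ht | ht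
    · simp [cutDown_of_le ht]
    · rw [mul_assoc, cutDown_of_ge (hδε.le.trans ht),
        truncInv_mul_self (sub_pos.2 hδε) (by linarith), mul_one]
  exact (hfactor ▸ h).of_mul_left

lemma rankGE_of_cfc_bump_notMem {X : A} (hsa : IsSelfAdjoint (X * d))
    (hM : ∀ i : Fin m, cfc (bump (i + 1)) (X * d) ∉ M.1) : RankGE m d M := by
  set z := X * d with hz
  have hinv : Continuous (truncInv (1 / 2)) := continuous_truncInv (by norm_num)
  have hrow : ∀ i : Fin m, cfc (fun t => bump (i + 1) t * truncInv (1 / 2) t) z * X * d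
      = cfc (bump (i + 1)) z := fun i => by
    rw [mul_assoc, ← hz, cfc_mul_self (by fun_prop) hsa]
    simp only [bump_mul_truncInv_mul_self (le_add_of_nonneg_left (i : ℕ).cast_nonneg)]
  refine ⟨fun i => cfc (fun t => bump (i + 1) t * truncInv (1 / 2) t) z * X,
    fun i j hij => ?_, fun i => by rw [hrow]; exact hM i⟩
  have hdist : (1 : ℝ) ≤ |((i : ℕ) + 1 : ℝ) - ((j : ℕ) + 1)| := by
    have hne : ((i : ℕ) : ℤ) - (j : ℕ) ≠ 0 := by omega
    rw [add_sub_add_right_eq_sub]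
    exact_mod_cast Int.one_le_abs hne
  beta_reduce
  rw [hrow, hrow, star_cfc, cfc_mul_cfc (by fun_prop) (by fun_prop)]
  simp only [bump_mul_bump_eq_zero hdist, cfc_const_zero]

variable [PartialOrder A] [StarOrderedRing A]

lemma exists_star_mul_mul_mul_eq_of_notMem {I : TwoSidedIdeal A} (hI : IsClosed (I : Set A)) {y : A}
    (hy : y ∉ I) :
    ∃ X g : A, IsSelfAdjoint X ∧ star y * X * y * (star y * g) = star y * g ∧ star y * g ∉ I := by
  obtain ⟨ε, hε, hcut⟩ := exists_cfc_cutDown_star_mul_self_notMem hI hy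
  have hsa : IsSelfAdjoint (star y * y) := .star_mul_self y
  set k := cfc (truncInv ε) (star y * y) with hk
  set e := cfc (cutDown ε) (star y * y)
  have hke : k * (star y * y) * e = e := cfc_truncInv_mul_self_mul_cfc_cutDown hε hsa
  have hye : star y * (y * (k * e)) = e := by
    simpa only [mul_assoc] using self_mul_cfc_truncInv_mul_cfc_cutDown hε hsa
  refine ⟨y * (k * k) * star y, y * (k * e), ?_, ?_, hye.symm ▸ hcut⟩
  · simpa only [hk, star_cfc] using (IsSelfAdjoint.star_mul_self k).conjugate y
  · calc star y * (y * (k * k) * star y) * y * (star y * (y * (k * e)))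
        = star y * (y * (k * (k * (star y * y) * e))) := by rw [hye]; noncomm_ring
      _ = star y * (y * (k * e)) := by rw [hke]

-- `star d * X * d` is, modulo `M`, a diagonal operator with eigenvalues `1, …, m`.
lemma exists_cfc_bump_notMem {x : Fin m → A}
    (horth : Pairwise fun i j => x i * d * star (x j * d) ∈ M.1) (hx : ∀ i, x i * d ∉ M.1) :
    ∃ X, IsSelfAdjoint X ∧ ∀ i : Fin m, cfc (bump (i + 1)) (star d * X * d) ∉ M.1 := by
  choose Y g hY hfix hg using fun i => exists_star_mul_mul_mul_eq_of_notMem M.isClosed (hx i)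
  set X := ∑ i : Fin m, ((i : ℝ) + 1) • (star (x i) * Y i * x i) with hXdef
  have hX : IsSelfAdjoint X := isSelfAdjoint_sum _ fun i _ =>
    (IsSelfAdjoint.all ((i : ℝ) + 1)).smul ((hY i).conjugate' (x i))
  refine ⟨X, hX, fun j hj => ?_⟩
  set c := star (x j * d) * g j with hc
  have hsum : star d * X * d * c
      = ∑ i : Fin m, ((i : ℝ) + 1) • (star (x i * d) * Y i * (x i * d) * c) := by
    simp only [hXdef, Finset.mul_sum, Finset.sum_mul, mul_smul_comm, smul_mul_assoc, star_mul,
      mul_assoc]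
  have hrest : ∀ i ≠ j, ((i : ℝ) + 1) • (star (x i * d) * Y i * (x i * d) * c) ∈ M.1 := by
    refine fun i hij => smul_mem_twoSidedIdeal _ _ ?_
    rw [mul_assoc, hc, ← mul_assoc (x i * d)]
    exact M.1.mul_mem_left _ _ (M.1.mul_mem_right _ _ (horth hij))
  have hev : star d * X * d * c - ((j : ℝ) + 1) • c ∈ M.1 := by
    rw [hsum, ← Finset.add_sum_erase _ _ (Finset.mem_univ j), hfix j, add_sub_cancel_left]
    exact sum_mem fun i hi => hrest i (Finset.ne_of_mem_erase hi)
  have hcfc := cfc_mul_sub_smul_mem (continuous_bump (j + 1))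
    (by fun_prop (disch := exact fun t => (lt_max_of_lt_left one_pos).ne'))
    (bump_sub_bump_self (j + 1)) (hX.conjugate' d) hev
  rw [bump_self, one_smul] at hcfc
  have hmem := M.1.sub_mem (M.1.mul_mem_right _ c hj) hcfc
  exact hg j (by rwa [sub_sub_cancel] at hmem)

lemma rankGE_of_mul_star_mem {x : Fin m → A}
    (horth : Pairwise fun i j => x i * d * star (x j * d) ∈ M.1) (hx : ∀ i, x i * d ∉ M.1) :
    RankGE m d M := by
  obtain ⟨X, hX, hM⟩ := exists_cfc_bump_notMem horth hx
  exact rankGE_of_cfc_bump_notMem (hX.conjugate' d) hM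

lemma RankGE.exists_cfc_cutDown (h : RankGE m d M) :
    ∃ ε > 0, RankGE m (cfc (cutDown ε) (star d * d)) M := by
  obtain ⟨x, horth, hx⟩ := h
  obtain ⟨X, hX, hM⟩ := exists_cfc_bump_notMem (horth.mono fun i j hij => hij ▸ M.1.zero_mem) hx
  have hlim : Tendsto (fun ε => d * cfc (approxUnit ε) (star d * d)) (𝓝[>] 0) (𝓝 d) :=
    tendsto_mul_cfc_approxUnit (C := 1) (star_mul_self_nonneg d) (by rw [one_smul])
  have hbump : ∀ᶠ ε in 𝓝[>] (0 : ℝ), ∀ i : Fin m, cfc (bump (i + 1))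
      (star (d * cfc (approxUnit ε) (star d * d)) * X * (d * cfc (approxUnit ε) (star d * d)))
        ∉ M.1 := by
    refine eventually_all.2 fun i => ?_
    exact (tendsto_cfc_of_isSelfAdjoint (continuous_bump _) ((hlim.star.mul_const X).mul hlim)
      (fun ε => hX.conjugate' _) (hX.conjugate' d)).eventually_mem
      (M.isClosed.isOpen_compl.mem_nhds (hM i))
  obtain ⟨ε, hM, hε⟩ := (hbump.and self_mem_nhdsWithin).exists
  refine ⟨ε, hε, ?_⟩
  have happ : cfc (approxUnit ε) (star d * d)
      = cfc (truncInv ε) (star d * d) * cfc (cutDown ε) (star d * d) := by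
    rw [cfc_mul_cfc (continuous_truncInv hε) (continuous_cutDown ε)]
    simp only [mul_comm (truncInv ε _)]
    rfl
  have hsa := hX.conjugate' (d * cfc (approxUnit ε) (star d * d))
  set Y := star (d * cfc (approxUnit ε) (star d * d)) * X
  rw [happ, ← mul_assoc, ← mul_assoc] at hsa
  refine rankGE_of_cfc_bump_notMem hsa fun i => ?_
  simpa only [happ, mul_assoc] using hM i

lemma RankGE.star_of_mul_right {S β : A} (h : RankGE m (S * β) M) : RankGE m (star S) M := by
  obtain ⟨ε, hε, x, horth, hx⟩ := h.exists_cfc_cutDown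
  set T := S * β with hT
  have hsa : IsSelfAdjoint (star T * T) := .star_mul_self T
  have hinv := continuous_truncInv hε
  set e := cfc (cutDown ε) (star T * T)
  set s := cfc (fun t => √(truncInv ε t)) (star T * T) with hs
  have hsT : s * (star T * T) * s = cfc (truncInv ε) (star T * T) * (star T * T) := by
    rw [hs, cfc_mul_self (by fun_prop) hsa, cfc_mul_cfc (by fun_prop) (by fun_prop),
      cfc_mul_self hinv hsa]
    congr 1; ext t
    rw [mul_right_comm, Real.mul_self_sqrt (truncInv_pos hε t).le]
  have hes : e * (s * (star T * T) * s) = e := by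
    rw [hsT, ← mul_assoc, cfc_cutDown_mul_cfc_truncInv_mul_self hε hsa]
  have hrow : ∀ i, x i * e * s * star β * star S = x i * e * s * star T := fun i => by
    rw [hT, star_mul, mul_assoc _ (star β)]
  refine ⟨fun i => x i * e * s * star β, fun i j hij => ?_, fun i hi => hx i ?_⟩
  · calc x i * e * s * star β * star S * star (x j * e * s * star β * star S)
        = x i * (e * (s * (star T * T) * s)) * star (x j * e) := by
          rw [hrow, hrow, star_mul _ (star T), star_mul _ s, star_star, hs, star_cfc, ← hs]
          noncomm_ring
      _ = 0 := by rw [hes, horth hij]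
  · rw [hrow] at hi
    have hmem := M.1.mul_mem_right _ (T * s) hi
    rwa [show x i * e * s * star T * (T * s) = x i * (e * (s * (star T * T) * s)) by noncomm_ring,
      hes] at hmem

lemma RankGE.of_mul_mul {α S β : A} (h : RankGE m (α * S * β) M) : RankGE m S M := by
  rw [mul_assoc] at h
  have hstar : RankGE m (star S * 1) M := by simpa using h.of_mul_left.star_of_mul_right
  simpa using hstar.star_of_mul_right

end Rank

section Support

/-- The right annihilator of `d` annihilates `S`. In a C⋆-algebra this is implied by membership of
`S` in the closed left ideal generated by `d`, and unlike the latter it is preserved without any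
approximation by the algebraic operations below. -/
def SupportedOn {A : Type*} [Ring A] (S d : A) : Prop := ∀ k, d * k = 0 → S * k = 0

namespace SupportedOn

variable {A : Type*} [Ring A] {S T d e : A}

lemma trans (hS : SupportedOn S d) (hd : SupportedOn d e) : SupportedOn S e :=
  fun k hk => hS k (hd k hk)

lemma mul_left (α : A) (h : SupportedOn S d) : SupportedOn (α * S) d := fun k hk => by
  rw [mul_assoc, h k hk, mul_zero]

lemma mul_self (α d : A) : SupportedOn (α * d) d := mul_left α fun _ hk => hk

lemma add (hS : SupportedOn S d) (hT : SupportedOn T d) : SupportedOn (S + T) d := fun k hk => by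
  rw [add_mul, hS k hk, hT k hk, add_zero]

lemma sum {ι : Type*} {s : Finset ι} {S : ι → A} (h : ∀ i ∈ s, SupportedOn (S i) d) :
    SupportedOn (∑ i ∈ s, S i) d := fun k hk => by
  rw [Finset.sum_mul, Finset.sum_eq_zero fun i hi => h i hi k hk]

end SupportedOn

lemma supportedOn_cfc_cutDown {A : Type*} [CStarAlgebra A] {ε : ℝ} (hε : 0 < ε) (S : A) :
    SupportedOn (cfc (cutDown ε) (star S * S)) S := by
  rw [← cfc_cutDown_mul_cfc_truncInv_mul_self hε (.star_mul_self S), ← mul_assoc]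
  exact .mul_self _ S

end Support

section Linking

variable {A : Type*} [CStarAlgebra A] [PartialOrder A] [StarOrderedRing A] {m : ℕ} {d e : A}

lemma exists_forall_rankGE_cfc_cutDown (h : ∀ M, RankGE m d M) :
    ∃ ε > 0, ∀ M, RankGE m (cfc (cutDown ε) (star d * d)) M := by
  obtain ⟨ε, hε, hcov⟩ := exists_forall_mem_of_antitone isCompact_univ
    (U := fun ε => {M | RankGE m (cfc (cutDown ε) (star d * d)) M})
    (fun _ _ => isOpen_setOf_rankGE _ _) (fun _ _ _ hδ M hM => hM.cfc_cutDown_mono hδ)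
    (fun M _ => (h M).exists_cfc_cutDown)
  exact ⟨ε, hε, fun M => hcov (mem_univ M)⟩

lemma exists_forall_rankGE_merge (hsr1 : Dense {a : A | IsUnit a}) {d₁ d₂ : A}
    {K : Set (MaximalTwoSidedIdeal A)} (hK : IsCompact K)
    (h : ∀ M ∈ K, RankGE m d₁ M ∨ RankGE m d₂ M) :
    ∃ u v, ∀ M ∈ K, RankGE m (d₂ + (d₁ * u + d₂ * v) * d₁) M := by
  obtain ⟨ε, hε, hcov⟩ := exists_forall_mem_of_antitone hK
    (U := fun ε => {M | RankGE m (cfc (cutDown ε) (star d₁ * d₁)) M} ∪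
      {M | RankGE m (cfc (cutDown ε) (star d₂ * d₂)) M})
    (fun _ _ => (isOpen_setOf_rankGE _ _).union (isOpen_setOf_rankGE _ _))
    (fun _ _ _ hδ => union_subset_union (fun M hM => RankGE.cfc_cutDown_mono hδ hM)
      (fun M hM => RankGE.cfc_cutDown_mono hδ hM))
    (fun M hM => by
      rcases h M hM with h | h <;> obtain ⟨ε, hε, hcut⟩ := h.exists_cfc_cutDown
      exacts [⟨ε, hε, .inl hcut⟩, ⟨ε, hε, .inr hcut⟩])
  obtain ⟨u, v, ⟨α₁, β₁, h₁⟩, ⟨α₂, β₂, h₂⟩⟩ :=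
    exists_factorization_cfc_cutDown_of_merge hsr1 d₁ d₂ hε
  refine ⟨u, v, fun M hM => ?_⟩
  rcases hcov hM with h | h
  exacts [(h₁ ▸ h).of_mul_mul, (h₂ ▸ h).of_mul_mul]

lemma exists_mem_forall_rankGE (hsr1 : Dense {a : A | IsUnit a}) {L : Set A} (hzero : (0 : A) ∈ L)
    (hmerge : ∀ d₁ ∈ L, ∀ d₂ ∈ L, ∀ u v, d₂ + (d₁ * u + d₂ * v) * d₁ ∈ L)
    (h : ∀ M, ∃ d ∈ L, RankGE m d M) : ∃ d ∈ L, ∀ M, RankGE m d M := by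
  classical
  choose d hdL hd using h
  have hfin : ∀ (t : Finset (MaximalTwoSidedIdeal A)) (K : Set (MaximalTwoSidedIdeal A)),
      IsCompact K → (∀ M ∈ K, ∃ N ∈ t, RankGE m (d N) M) → ∃ S ∈ L, ∀ M ∈ K, RankGE m S M := by
    intro t
    induction t using Finset.induction_on with
    | empty => exact fun K _ hcov => ⟨0, hzero, fun M hM => by simpa using hcov M hM⟩
    | insert N t _ ih =>
      intro K hK hcov
      obtain ⟨S, hSL, hS⟩ := ih _ (hK.diff (isOpen_setOf_rankGE m (d N))) fun M hM => by
        obtain ⟨N', hN', hM'⟩ := hcov M hM.1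
        rcases Finset.mem_insert.1 hN' with rfl | hN'
        exacts [absurd hM' hM.2, ⟨N', hN', hM'⟩]
      obtain ⟨u, v, huv⟩ := exists_forall_rankGE_merge hsr1 (d₁ := d N) (d₂ := S) hK fun M hM =>
        or_iff_not_imp_left.2 fun hN => hS M ⟨hM, hN⟩
      exact ⟨_, hmerge _ (hdL N) _ hSL u v, huv⟩
  obtain ⟨t, -, ht⟩ := isCompact_univ.elim_nhds_subcover (fun N => {M | RankGE m (d N) M})
    fun N _ => (isOpen_setOf_rankGE m (d N)).mem_nhds (hd N)
  obtain ⟨S, hSL, hS⟩ := hfin t univ isCompact_univ fun M hM => by simpa using ht hM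
  exact ⟨S, hSL, fun M => hS M (mem_univ M)⟩

lemma RankGE.exists_supportedOn {M : MaximalTwoSidedIdeal A} (hd : RankGE m d M)
    (he : RankGE m e M) : ∃ S, SupportedOn S d ∧ SupportedOn (star S) e ∧ RankGE m S M := by
  obtain ⟨x, hx_orth, hx⟩ := hd
  obtain ⟨y, hy_orth, hy⟩ := he
  have hyy : ∀ i, y i * e * star (y i * e) ∉ M.1 := fun i h => hy i <| by
    rw [← star_star (y i * e)]
    exact star_mem_of_mem M.isClosed (mem_of_star_mul_self_mem M.isClosed (by rwa [star_star]))
  choose w hw using fun i => M.exists_mul_mul_notMem (hyy i) (hx i)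
  set S := ∑ i, star (y i * e) * w i * (x i * d) with hS
  have hrow : ∀ i, y i * e * S = y i * e * star (y i * e) * w i * (x i * d) := fun i => by
    rw [hS, Finset.mul_sum, Finset.sum_eq_single i]
    · noncomm_ring
    · intro j _ hji
      rw [mul_assoc (star _), ← mul_assoc, hy_orth hji.symm, zero_mul]
    · simp
  refine ⟨S, .sum fun i _ => ?_, ?_, fun i => y i * e, fun i j hij => ?_, fun i => ?_⟩
  · rw [← mul_assoc]
    exact .mul_self _ d
  · rw [hS, star_sum]
    refine .sum fun i _ => ?_
    rw [star_mul _ (x i * d), star_mul _ (w i), star_star, ← mul_assoc, ← mul_assoc]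
    exact .mul_self _ e
  · beta_reduce
    rw [hrow, hrow, star_mul _ (x j * d), ← mul_assoc, mul_assoc _ (x i * d), hx_orth hij,
      mul_zero, zero_mul]
  · rw [hrow]
    exact hw i

lemma exists_supportedOn_forall_rankGE (hsr1 : Dense {a : A | IsUnit a})
    (hd : ∀ M, RankGE m d M) (he : ∀ M, RankGE m e M) :
    ∃ S, SupportedOn S d ∧ SupportedOn (star S) e ∧ ∀ M, RankGE m S M := by
  have hmerge : ∀ d₁ ∈ {S | SupportedOn S d ∧ SupportedOn (star S) e},
      ∀ d₂ ∈ {S | SupportedOn S d ∧ SupportedOn (star S) e}, ∀ u v,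
        d₂ + (d₁ * u + d₂ * v) * d₁ ∈ {S | SupportedOn S d ∧ SupportedOn (star S) e} := by
    rintro d₁ ⟨h₁, h₁'⟩ d₂ ⟨h₂, h₂'⟩ u v
    refine ⟨h₂.add (h₁.mul_left _), ?_⟩
    rw [star_add, star_mul, star_add, star_mul, star_mul]
    exact h₂'.add (((h₁'.mul_left _).add (h₂'.mul_left _)).mul_left _)
  obtain ⟨S, ⟨hSd, hSe⟩, hS⟩ := exists_mem_forall_rankGE hsr1
    (L := {S | SupportedOn S d ∧ SupportedOn (star S) e})
    ⟨fun k _ => zero_mul k, fun k _ => by rw [star_zero, zero_mul]⟩ hmerge fun M => by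
      obtain ⟨S, hSd, hSe, hS⟩ := (hd M).exists_supportedOn (he M)
      exact ⟨S, ⟨hSd, hSe⟩, hS⟩
  exact ⟨S, hSd, hSe, hS⟩

end Linking

section Splitting

lemma MaximalTwoSidedIdeal.exists_mul_notMem_imp_forall_notMem {A : Type*} [Ring A]
    (M : MaximalTwoSidedIdeal A) {b : A} (hb : b ∉ M.1) {n : ℕ} {a : Fin n → A}
    (ha : ∀ i, a i ∉ M.1) :
    ∃ y, y * b ∉ M.1 ∧ ∀ N : MaximalTwoSidedIdeal A, y * b ∉ N.1 → ∀ i, a i ∉ N.1 := by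
  induction n with
  | zero => exact ⟨1, by rwa [one_mul], fun _ _ i => i.elim0⟩
  | succ n ih =>
    obtain ⟨y, hy, hyN⟩ := ih fun i => ha i.succ
    obtain ⟨w, hw⟩ := M.exists_mul_mul_notMem (ha 0) hy
    rw [← mul_assoc] at hw
    refine ⟨a 0 * w * y, hw, fun N hN => Fin.cases (fun h => hN ?_) (hyN N fun h => hN ?_)⟩
    · rw [mul_assoc, mul_assoc]
      exact N.1.mul_mem_right _ _ h
    · rw [mul_assoc]
      exact N.1.mul_mem_left _ _ h

variable {A : Type*} [CStarAlgebra A] {m : ℕ} {e : A}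

lemma RankGE.of_succ {M : MaximalTwoSidedIdeal A} (h : RankGE (m + 1) e M) : RankGE m e M := by
  obtain ⟨x, horth, hx⟩ := h
  exact ⟨fun i => x i.castSucc, fun i j hij => horth ((Fin.castSucc_injective m).ne hij),
    fun i => hx i.castSucc⟩

variable [PartialOrder A] [StarOrderedRing A]

/-- A positive element `c` split off from `e`, orthogonal to an element `d` that retains rank at
least `m` at every maximal ideal. -/
structure IsSplitting (m : ℕ) (e c d : A) : Prop where
  nonneg : 0 ≤ c
  mul_eq_zero : d * c = 0
  supportedOn_left : SupportedOn c e
  supportedOn_right : SupportedOn d e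
  rankGE : ∀ M, RankGE m d M

lemma RankGE.mul_one_sub {M : MaximalTwoSidedIdeal A} (h : RankGE m e M) {g : A} (hg : g ∈ M.1) :
    RankGE m (e * (1 - g)) M := by
  obtain ⟨x, horth, hx⟩ := h
  refine rankGE_of_mul_star_mem (x := x) (fun i j hij => ?_) fun i hi => hx i ?_
  · have hmem : g + (1 - g) * star g ∈ M.1 :=
      M.1.add_mem hg (M.1.mul_mem_left _ _ (star_mem_of_mem M.isClosed hg))
    have hexpand : x i * (e * (1 - g)) * star (x j * (e * (1 - g)))
        = x i * e * star (x j * e) - x i * e * (g + (1 - g) * star g) * star (x j * e) := by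
      simp only [star_mul, star_sub, star_one]
      noncomm_ring
    beta_reduce
    rw [hexpand, horth hij, zero_sub]
    exact M.1.neg_mem (M.1.mul_mem_right _ _ (M.1.mul_mem_left _ _ hmem))
  · rw [← mul_assoc, mul_sub, mul_one] at hi
    simpa using M.1.add_mem hi (M.1.mul_mem_left (x i * e) _ hg)

lemma exists_isSplitting_notMem (h : ∀ M, RankGE (m + 1) e M) (M : MaximalTwoSidedIdeal A) :
    ∃ c d, IsSplitting m e c d ∧ c ∉ M.1 := by
  obtain ⟨x, horth, hx⟩ := h M
  obtain ⟨y, hyM, hy⟩ := M.exists_mul_notMem_imp_forall_notMem (hx (Fin.last m))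
    fun i : Fin m => hx i.castSucc
  set p := y * (x (Fin.last m) * e) with hp
  obtain ⟨δ, hδ, hcut⟩ := exists_cfc_cutDown_star_mul_self_notMem M.isClosed hyM
  have hsa : IsSelfAdjoint (star p * p) := .star_mul_self p
  have hinv := continuous_truncInv hδ
  set g := star p * p * cfc (truncInv δ) (star p * p) with hg
  have hpe : SupportedOn p e := by
    rw [hp, ← mul_assoc]
    exact .mul_self _ e
  have hgp : SupportedOn g p := by
    rw [hg, self_mul_cfc hinv hsa]
    simp only [mul_comm _ (truncInv δ _)]
    rw [← cfc_mul_self hinv hsa, ← mul_assoc]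
    exact .mul_self _ p
  refine ⟨cfc (cutDown δ) (star p * p), e * (1 - g), ⟨cfc_nonneg fun t _ => cutDown_nonneg δ t, ?_,
    (supportedOn_cfc_cutDown hδ p).trans hpe, fun k hk => ?_, fun N => ?_⟩, hcut⟩
  · rw [mul_assoc, sub_mul, one_mul, hg, self_mul_cfc_truncInv_mul_cfc_cutDown hδ hsa, sub_self,
      mul_zero]
  · rw [mul_assoc, sub_mul, one_mul, hgp k (hpe k hk), sub_zero, hk]
  by_cases hpN : star p * p ∈ N.1
  · exact (h N).of_succ.mul_one_sub (N.1.mul_mem_right _ _ hpN)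
  -- Away from the ideals containing `p`, the rows `x i` orthogonal to the last one still work.
  have hrow : ∀ i : Fin m, x i.castSucc * (e * (1 - g)) = x i.castSucc * e := fun i => by
    have hstar : x i.castSucc * e * star p = 0 := by
      rw [hp, star_mul y, ← mul_assoc, horth (Fin.castSucc_ne_last i), zero_mul]
    rw [← mul_assoc, mul_sub, mul_one, hg, mul_assoc (star p), ← mul_assoc _ (star p), hstar,
      zero_mul, sub_zero]
  refine ⟨fun i => x i.castSucc, fun i j hij => ?_, fun i => ?_⟩
  · beta_reduce
    rw [hrow, hrow, horth ((Fin.castSucc_injective m).ne hij)]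
  · rw [hrow]
    exact hy N (fun hN => hpN (N.1.mul_mem_left _ _ hN)) i

-- A unit `W` that agrees with a link `S` from `d` to `d'` moves `c'` to an element orthogonal to
-- what remains of `d`.
lemma IsSplitting.exists_combine (hsr1 : Dense {a : A | IsUnit a}) {c d c' d' : A}
    (h : IsSplitting m e c d) (h' : IsSplitting m e c' d') :
    ∃ c'' d'', IsSplitting m e c'' d'' ∧
      ∀ M : MaximalTwoSidedIdeal A, c ∉ M.1 ∨ c' ∉ M.1 → c'' ∉ M.1 := by
  obtain ⟨S, hSd, hSd', hS⟩ := exists_supportedOn_forall_rankGE hsr1 h.rankGE h'.rankGE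
  obtain ⟨ε, hε, hcut⟩ := exists_forall_rankGE_cfc_cutDown hS
  obtain ⟨W, hWcut, hWfix⟩ := exists_unit_mul_cfc_cutDown_eq hsr1 S hε
  set r := cfc (cutDown ε) (star S * S)
  have hrS : SupportedOn r S := supportedOn_cfc_cutDown hε S
  have hconj : 0 ≤ star (W : A) * c' * W := star_left_conjugate_nonneg h'.nonneg _
  have hrW : r * star (W : A) = r * star S := by
    simpa only [star_mul, r, star_cfc] using congrArg star hWcut
  refine ⟨c + star (W : A) * c' * W, r, ⟨add_nonneg h.nonneg hconj, ?_, h.supportedOn_left.add ?_,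
    hrS.trans (hSd.trans h.supportedOn_right), hcut⟩, fun M hM hmem => ?_⟩
  · rw [mul_add, hrS c (hSd c h.mul_eq_zero), mul_assoc (star _), ← mul_assoc r, hrW, mul_assoc r,
      ← mul_assoc (star S), hSd' c' h'.mul_eq_zero, zero_mul, mul_zero, add_zero]
  · intro k hk
    rw [mul_assoc, hWfix k (hSd k (h.supportedOn_right k hk)) (hSd' k (h'.supportedOn_right k hk)),
      mul_assoc, h'.supportedOn_left k hk, mul_zero]
  · rcases hM with hM | hM
    · exact hM (mem_of_nonneg_of_le M.isClosed h.nonneg (le_add_of_nonneg_right hconj) hmem)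
    · have hconjM := mem_of_nonneg_of_le M.isClosed hconj (le_add_of_nonneg_left h.nonneg) hmem
      have hcancel : star (↑W⁻¹ : A) * (star (W : A) * c' * W) * ↑W⁻¹ = c' := by
        rw [mul_assoc, mul_assoc _ (W : A), W.mul_inv, mul_one, ← mul_assoc, ← star_mul, W.mul_inv,
          star_one, one_mul]
      exact hM (hcancel ▸ M.1.mul_mem_right _ _ (M.1.mul_mem_left _ _ hconjM))

lemma exists_isSplitting_forall_notMem (hsr1 : Dense {a : A | IsUnit a})
    (h : ∀ M, RankGE (m + 1) e M) :
    ∃ c d, IsSplitting m e c d ∧ ∀ M : MaximalTwoSidedIdeal A, c ∉ M.1 := by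
  classical
  choose c d hcd hc using exists_isSplitting_notMem h
  obtain ⟨t, -, ht⟩ := isCompact_univ.elim_nhds_subcover
    (fun N => {M : MaximalTwoSidedIdeal A | c N ∉ M.1})
    fun N _ => (isOpen_setOf_notMem (c N)).mem_nhds (hc N)
  have hfin : ∀ t : Finset (MaximalTwoSidedIdeal A), ∃ c' d', IsSplitting m e c' d' ∧
      ∀ M : MaximalTwoSidedIdeal A, (∃ N ∈ t, c N ∉ M.1) → c' ∉ M.1 := by
    intro t
    induction t using Finset.induction_on with
    | empty => exact ⟨0, e, ⟨le_rfl, mul_zero e, fun k _ => zero_mul k, fun _ hk => hk,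
        fun M => (h M).of_succ⟩, by simp⟩
    | insert N t _ ih =>
      obtain ⟨c₁, d₁, hcd₁, hc₁⟩ := ih
      obtain ⟨c₂, d₂, hcd₂, hc₂⟩ := (hcd N).exists_combine hsr1 hcd₁
      refine ⟨c₂, d₂, hcd₂, fun M hM => hc₂ M ?_⟩
      obtain ⟨N', hN', hM'⟩ := hM
      rcases Finset.mem_insert.1 hN' with rfl | hN'
      exacts [.inl hM', .inr (hc₁ M ⟨N', hN', hM'⟩)]
  obtain ⟨c', d', hcd', hc'⟩ := hfin t
  exact ⟨c', d', hcd', fun M => hc' M (by simpa using ht (mem_univ M))⟩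

lemma mul_eq_zero_symm_of_isSelfAdjoint {R : Type*} [NonUnitalSemiring R] [StarRing R] {a b : R}
    (ha : IsSelfAdjoint a) (hb : IsSelfAdjoint b) (hab : a * b = 0) : b * a = 0 := by
  simpa only [star_mul, ha.star_eq, hb.star_eq, star_zero] using congrArg star hab

lemma pairwise_mul_eq_zero_cons {R : Type*} [NonUnitalSemiring R] [StarRing R] {n : ℕ} {b : R}
    {a : Fin n → R} (hb : IsSelfAdjoint b) (ha : ∀ i, IsSelfAdjoint (a i))
    (hba : ∀ i, b * a i = 0) (h : Pairwise fun i j => a i * a j = 0) :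
    Pairwise fun i j => Matrix.vecCons b a i * Matrix.vecCons b a j = 0 := by
  refine Fin.cases (Fin.cases (fun hij => absurd rfl hij) fun j _ => hba j) fun i =>
    Fin.cases (fun _ => mul_eq_zero_symm_of_isSelfAdjoint hb (ha i) (hba i)) fun j hij => ?_
  exact h fun hij' => hij (congrArg Fin.succ hij')

theorem exists_pairwise_orthogonal_full (hsr1 : Dense {a : A | IsUnit a})
    (h : ∀ M, RankGE m e M) :
    ∃ c : Fin m → A, (∀ i, 0 ≤ c i) ∧ Pairwise (fun i j => c i * c j = 0) ∧
      (∀ i, ∀ M : MaximalTwoSidedIdeal A, c i ∉ M.1) ∧ ∀ i, SupportedOn (c i) e := by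
  induction m generalizing e with
  | zero => exact ⟨Fin.elim0, (·.elim0), (·.elim0), (·.elim0), (·.elim0)⟩
  | succ m ih =>
    obtain ⟨c, d, hcd, hc⟩ := exists_isSplitting_forall_notMem hsr1 h
    obtain ⟨c', hnonneg, horth, hfull, hsupp⟩ := ih hcd.rankGE
    have hleft : ∀ i, c * c' i = 0 := fun i => mul_eq_zero_symm_of_isSelfAdjoint
      (hnonneg i).isSelfAdjoint hcd.nonneg.isSelfAdjoint (hsupp i c hcd.mul_eq_zero)
    exact ⟨Matrix.vecCons c c', Fin.cases hcd.nonneg hnonneg,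
      pairwise_mul_eq_zero_cons hcd.nonneg.isSelfAdjoint (fun i => (hnonneg i).isSelfAdjoint) hleft
        horth,
      Fin.cases hc hfull, Fin.cases hcd.supportedOn_left fun i =>
        (hsupp i).trans hcd.supportedOn_right⟩

end Splitting

section Indivisible

lemma exists_and_not_succ {P : ℕ → Prop} (hzero : P 0) {k : ℕ} (hk : ¬ P k) :
    ∃ n, P n ∧ ¬ P (n + 1) := by
  by_contra! h
  exact hk (Nat.rec hzero h k)

variable {A : Type*} [CStarAlgebra A] [PartialOrder A] [StarOrderedRing A]
  {M : MaximalTwoSidedIdeal A}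

/-- Modulo `M`, the element `a` does not support two orthogonal nonzero positive elements. -/
def IsIndivisible (M : MaximalTwoSidedIdeal A) (a : A) : Prop :=
  ∀ b b', 0 ≤ b → 0 ≤ b' → b * b' = 0 → SupportedOn b a → SupportedOn b' a → b ∈ M.1 ∨ b' ∈ M.1

lemma exists_isIndivisible_of_not_rankGE {k : ℕ} (h : ¬ RankGE k 1 M) :
    ∃ a, 0 ≤ a ∧ a ∉ M.1 ∧ IsIndivisible M a := by
  let P (n : ℕ) := ∃ a : Fin (n + 1) → A,
    (∀ i, 0 ≤ a i) ∧ Pairwise (fun i j => a i * a j = 0) ∧ ∀ i, a i ∉ M.1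
  have hP : ¬ P k := by
    rintro ⟨a, hnonneg, horth, ha⟩
    refine h (RankGE.of_succ ⟨a, fun i j hij => ?_, fun i => by simpa using ha i⟩)
    simpa [(hnonneg j).isSelfAdjoint.star_eq] using horth hij
  obtain ⟨n, ⟨a, hnonneg, horth, ha⟩, hmax⟩ := exists_and_not_succ
    (P := P) ⟨fun _ => 1, fun _ => zero_le_one,
      fun i j hij => absurd (Fin.subsingleton_one.elim i j) hij, fun _ => M.one_notMem⟩ hP
  refine ⟨a 0, hnonneg 0, ha 0, fun b b' hb hb' hbb' hba hb'a => ?_⟩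
  by_contra! hnot
  have htail : ∀ c, SupportedOn c (a 0) → ∀ i : Fin n, c * a i.succ = 0 :=
    fun c hc i => hc _ (horth (Fin.succ_ne_zero i).symm)
  have hsa : ∀ i : Fin n, IsSelfAdjoint (a i.succ) := fun i => (hnonneg i.succ).isSelfAdjoint
  refine hmax ⟨Matrix.vecCons b (Matrix.vecCons b' fun i => a i.succ), ?_, ?_, ?_⟩
  · exact Fin.cases hb (Fin.cases hb' fun i => hnonneg i.succ)
  · refine pairwise_mul_eq_zero_cons hb.isSelfAdjoint (Fin.cases hb'.isSelfAdjoint hsa)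
      (Fin.cases hbb' (htail b hba)) ?_
    exact pairwise_mul_eq_zero_cons hb'.isSelfAdjoint hsa (htail b' hb'a)
      fun i j hij => horth ((Fin.succ_injective n).ne hij)
  · exact Fin.cases hnot.1 (Fin.cases hnot.2 fun i => ha i.succ)

lemma continuous_cfc_of_continuous_uncurry {A X : Type*} [CStarAlgebra A] [UniformSpace X]
    [WeaklyLocallyCompactSpace X] {F : X → ℝ → ℝ} (hF : Continuous ↿F) (a : A) :
    Continuous fun s => cfc (F s) a := by
  refine continuous_iff_continuousAt.2 fun s => continuousAt_cfc_fun ?_ ?_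
  · rw [tendstoUniformlyOn_iff_tendstoUniformly_comp_coe]
    refine Continuous.tendstoUniformly (fun s (t : spectrum ℝ a) => F s t) ?_ s
    exact hF.comp (continuous_fst.prodMk (continuous_subtype_val.comp continuous_snd))
  · exact .of_forall fun s => (hF.comp (Continuous.prodMk_right s)).continuousOn

lemma cfc_cutDown_eq_zero_of_norm_le {A : Type*} [CStarAlgebra A] {ε : ℝ} {a : A} (h : ‖a‖ ≤ ε) :
    cfc (cutDown ε) a = 0 := by
  nontriviality A
  rw [cfc_congr (g := fun _ => 0) fun t ht => ?_, cfc_const_zero]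
  exact cutDown_of_le ((le_abs_self t).trans ((spectrum.norm_le_norm_of_mem ht).trans h))

lemma mul_self_sub_smul {A : Type*} [CStarAlgebra A] {z : A} (hz : IsSelfAdjoint z) (c : ℝ) :
    z * z - c • z = z * cfc (cutDown c) z - cfc (fun t => t * max (c - t) 0) z := by
  have hcut := continuous_cutDown c
  rw [self_mul_cfc hcut hz, ← cfc_sub _ _ z (by fun_prop) (by fun_prop)]
  have hlhs : z * z - c • z = cfc (fun t : ℝ => t * t - c * t) z := by
    rw [cfc_sub _ _ z (by fun_prop) (by fun_prop), cfc_const_mul c _ z (by fun_prop),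
      cfc_mul _ _ z (by fun_prop) (by fun_prop), cfc_id' ℝ z]
  rw [hlhs]
  congr 1 with t
  rcases le_total t c with h | h
  · rw [cutDown_of_le h, max_eq_left (by linarith)]
    ring
  · rw [cutDown_of_ge h, max_eq_right (by linarith)]
    ring

lemma IsIndivisible.cfc_mul_max_sub_mem {a z : A} (ha : IsIndivisible M a) (hz : 0 ≤ z)
    (hza : SupportedOn z a) {s : ℝ} (hs : 0 < s) (h : cfc (cutDown s) z ∉ M.1) :
    cfc (fun t => t * max (s - t) 0) z ∈ M.1 := by
  have hzsa := hz.isSelfAdjoint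
  refine (ha (cfc (cutDown s) z) _ (cfc_nonneg fun t _ => cutDown_nonneg s t)
    (cfc_nonneg fun t ht => ?_) ?_ ?_ ?_).resolve_left h
  · exact mul_nonneg (spectrum_nonneg_of_nonneg hz ht) (le_max_right _ _)
  · rw [cfc_mul_cfc (by fun_prop) (by fun_prop), cfc_congr (g := fun _ => 0) fun t _ => ?_,
      cfc_const_zero]
    rcases le_total t s with hts | hts
    · rw [cutDown_of_le hts, zero_mul]
    · rw [max_eq_right (by linarith), mul_zero, mul_zero]
  · rw [← cfc_cutDown_mul_cfc_truncInv_mul_self hs hzsa]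
    exact hza.mul_left _
  · simp only [mul_comm _ (max _ _)]
    rw [← cfc_mul_self (by fun_prop) hzsa]
    exact hza.mul_left _

/-- The constant `c` is the maximum of the spectrum of `z` modulo `M`. -/
lemma IsIndivisible.exists_mul_self_sub_smul_mem {a z : A} (ha : IsIndivisible M a) (hz : 0 ≤ z)
    (hza : SupportedOn z a) : ∃ c : ℝ, 0 ≤ c ∧ z * z - c • z ∈ M.1 := by
  have hzsa := hz.isSelfAdjoint
  let lower (s t : ℝ) := t * max (s - t) 0
  have hlower : Continuous ↿lower := by unfold lower; fun_prop
  have hupper : Continuous ↿cutDown := by unfold cutDown; fun_prop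
  let T := {s : ℝ | cfc (cutDown s) z ∈ M.1} ∩ Ici 0
  have hTbdd : BddBelow T := ⟨0, fun s hs => hs.2⟩
  have hc : sInf T ∈ T := by
    refine IsClosed.csInf_mem ?_ ⟨‖z‖, ?_, norm_nonneg z⟩ hTbdd
    · exact (M.isClosed.preimage (continuous_cfc_of_continuous_uncurry hupper z)).inter isClosed_Ici
    · simp [cfc_cutDown_eq_zero_of_norm_le]
  have hbelow : ∀ s < sInf T, cfc (lower s) z ∈ M.1 := fun s hs => by
    rcases le_or_gt s 0 with hs0 | hs0
    · rw [cfc_congr (g := fun _ => 0) fun t ht => ?_, cfc_const_zero]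
      · exact M.1.zero_mem
      · have := spectrum_nonneg_of_nonneg hz ht
        simp only [lower, max_eq_right (by linarith : s - t ≤ 0), mul_zero]
    · exact ha.cfc_mul_max_sub_mem hz hza hs0 fun hcut => hs.not_ge (csInf_le hTbdd ⟨hcut, hs0.le⟩)
  have hlim : cfc (lower (sInf T)) z ∈ M.1 := by
    have hclosed := M.isClosed.preimage (continuous_cfc_of_continuous_uncurry hlower z)
    exact hclosed.closure_subset_iff.2 hbelow (closure_Iio (sInf T) ▸ self_mem_Iic)
  refine ⟨sInf T, hc.2, ?_⟩
  rw [mul_self_sub_smul hzsa]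
  exact M.1.sub_mem (M.1.mul_mem_left _ _ hc.1) hlim

end Indivisible

section MinimalProjection

variable {A : Type*} [CStarAlgebra A] [PartialOrder A] [StarOrderedRing A]
  {M : MaximalTwoSidedIdeal A} {p : A}

lemma nonneg_of_sub_smul_mem {x : A} {c : ℝ} (hp : 0 ≤ p) (hpM : p ∉ M.1) (hx : 0 ≤ x)
    (h : x - c • p ∈ M.1) : 0 ≤ c := by
  by_contra! hc
  have hle : (-c) • p ≤ x - c • p := by
    rw [neg_smul, neg_le_sub_iff_le_add]
    exact le_add_of_nonneg_left hx
  have hmem := mem_of_nonneg_of_le M.isClosed (smul_nonneg (neg_pos.2 hc).le hp) hle h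
  refine hpM ?_
  simpa [smul_smul, hc.ne] using smul_mem_twoSidedIdeal M.1 (-c)⁻¹ hmem

/-- A positive lift `p` of a minimal projection of the quotient by `M`: every positive element
supported on `p` is a scalar multiple of a projection modulo `M`. -/
structure IsMinimalProjection (M : MaximalTwoSidedIdeal A) (p : A) : Prop where
  nonneg : 0 ≤ p
  notMem : p ∉ M.1
  mul_self_sub_mem : p * p - p ∈ M.1
  exists_mul_self_sub_smul_mem :
    ∀ z, 0 ≤ z → SupportedOn z p → ∃ c : ℝ, 0 ≤ c ∧ z * z - c • z ∈ M.1

lemma exists_isMinimalProjection {k : ℕ} (h : ¬ RankGE k 1 M) : ∃ p, IsMinimalProjection M p := by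
  obtain ⟨a, ha, haM, hindiv⟩ := exists_isIndivisible_of_not_rankGE h
  obtain ⟨c, hc, hac⟩ := hindiv.exists_mul_self_sub_smul_mem ha fun _ hk => hk
  have hc0 : c ≠ 0 := by
    rintro rfl
    rw [zero_smul, sub_zero] at hac
    exact haM (mem_of_star_mul_self_mem M.isClosed (by rwa [ha.isSelfAdjoint.star_eq]))
  refine ⟨c⁻¹ • a, smul_nonneg (inv_nonneg.2 hc) ha, fun hmem => haM ?_, ?_, fun z hz hza =>
    hindiv.exists_mul_self_sub_smul_mem hz (hza.trans fun k hk => ?_)⟩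
  · simpa [smul_smul, hc0] using smul_mem_twoSidedIdeal M.1 c hmem
  · convert smul_mem_twoSidedIdeal M.1 (c⁻¹ * c⁻¹) hac using 1
    rw [smul_sub, smul_mul_smul_comm, smul_smul, inv_mul_cancel_right₀ hc0]
  · rw [smul_mul_assoc, hk, smul_zero]

lemma ringCon_mkₐ_eq_zero_iff {A : Type*} [Ring A] [Algebra ℂ A] (I : TwoSidedIdeal A) {x : A} :
    I.ringCon.mkₐ ℂ x = 0 ↔ x ∈ I := by
  rw [TwoSidedIdeal.mem_iff, ← RingCon.eq]
  rfl

/-- Comparing `z * z = c₁ • z` with `(z + p) * (z + p) = c₂ • (z + p)` expresses `z` through `p`. -/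
lemma exists_eq_smul_of_mul_self_eq_smul {B : Type*} [Ring B] [Algebra ℂ B] {p z : B} (hp : p ≠ 0)
    (hpp : p * p = p) (hpz : p * z = z) (hzp : z * p = z) {c₁ c₂ : ℝ} (hc₁ : 0 ≤ c₁)
    (hz : z * z = (c₁ : ℂ) • z) (hzp' : (z + p) * (z + p) = (c₂ : ℂ) • (z + p)) :
    ∃ c : ℝ, z = (c : ℂ) • p := by
  have hlin : ((c₁ + 2 - c₂ : ℝ) : ℂ) • z = ((c₂ - 1 : ℝ) : ℂ) • p := by
    rw [add_mul, mul_add, mul_add, hz, hzp, hpz, hpp] at hzp'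
    push_cast
    linear_combination (norm := module) hzp'
  have hne : c₁ + 2 - c₂ ≠ 0 := fun h0 => by
    rw [h0, Complex.ofReal_zero, zero_smul] at hlin
    have := (smul_eq_zero.1 hlin.symm).resolve_right hp
    have : c₂ - 1 = 0 := by exact_mod_cast this
    linarith
  refine ⟨(c₁ + 2 - c₂)⁻¹ * (c₂ - 1), ?_⟩
  rw [Complex.ofReal_mul, mul_smul, ← hlin, smul_smul, ← Complex.ofReal_mul, inv_mul_cancel₀ hne,
    Complex.ofReal_one, one_smul]

lemma IsMinimalProjection.exists_mul_mul_sub_smul_mem (hp : IsMinimalProjection M p) {x : A}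
    (hx : 0 ≤ x) : ∃ c : ℝ, 0 ≤ c ∧ p * x * p - c • p ∈ M.1 := by
  have hnonneg : ∀ y, 0 ≤ y → 0 ≤ p * y * p := fun y hy =>
    hp.nonneg.isSelfAdjoint.conjugate_nonneg hy
  obtain ⟨c₁, hc₁, h₁⟩ := hp.exists_mul_self_sub_smul_mem _ (hnonneg x hx) (.mul_self _ p)
  obtain ⟨c₂, -, h₂⟩ := hp.exists_mul_self_sub_smul_mem _
    (hnonneg (x + 1) (add_nonneg hx zero_le_one)) (.mul_self _ p)
  set q := M.1.ringCon.mkₐ ℂ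
  have hq : ∀ y, q y = 0 ↔ y ∈ M.1 := fun y => ringCon_mkₐ_eq_zero_iff M.1
  have hpp := (hq _).2 hp.mul_self_sub_mem
  rw [← hq, map_sub, sub_eq_zero, ← Complex.coe_smul, map_smul, map_mul] at h₁ h₂
  rw [map_sub, sub_eq_zero, map_mul] at hpp
  have hcorner : q (p * (x + 1) * p) = q (p * x * p) + q p := by
    simp only [mul_add, add_mul, mul_one, map_add, map_mul, hpp]
  rw [hcorner] at h₂
  obtain ⟨c, hc⟩ := exists_eq_smul_of_mul_self_eq_smul (fun h => hp.notMem ((hq p).1 h)) hpp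
    (by simp only [map_mul, ← mul_assoc, hpp]) (by simp only [map_mul, mul_assoc, hpp]) hc₁ h₁ h₂
  have hmem : p * x * p - c • p ∈ M.1 := by
    rw [← hq, map_sub, hc, ← Complex.coe_smul, map_smul, sub_self]
  exact ⟨c, nonneg_of_sub_smul_mem hp.nonneg hp.notMem (hnonneg x hx) hmem, hmem⟩

open scoped ComplexOrder

lemma IsMinimalProjection.exists_positiveLinearMap (hp : IsMinimalProjection M p) :
    ∃ φ : A →ₚ[ℂ] ℂ, ∀ x, p * x * p - φ x • p ∈ M.1 := by
  let q := M.1.ringCon.mkₐ ℂ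
  have hq : ∀ y, q y = 0 ↔ y ∈ M.1 := fun y => ringCon_mkₐ_eq_zero_iff M.1
  have hqp : q p ≠ 0 := fun h => hp.notMem ((hq p).1 h)
  let compress : A →ₗ[ℂ] M.1.ringCon.Quotient :=
    q.toLinearMap ∘ₗ LinearMap.mulLeftRight ℂ (p, p)
  have hpos : ∀ x, 0 ≤ x → ∃ c : ℝ, 0 ≤ c ∧ compress x = (c : ℂ) • q p := fun x hx => by
    obtain ⟨c, hc, hmem⟩ := hp.exists_mul_mul_sub_smul_mem hx
    refine ⟨c, hc, ?_⟩
    rw [← hq, map_sub, sub_eq_zero, ← Complex.coe_smul, map_smul] at hmem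
    exact hmem
  have hspan : ⊤ ≤ (ℂ ∙ q p).comap compress := by
    rw [← CStarAlgebra.span_nonneg, Submodule.span_le]
    intro x hx
    obtain ⟨c, -, hxc⟩ := hpos x hx
    exact Submodule.mem_span_singleton.2 ⟨c, hxc.symm⟩
  have hrange : ∀ x, compress x ∈ ℂ ∙ q p := fun x => hspan Submodule.mem_top
  let e := LinearEquiv.toSpanNonzeroSingleton ℂ _ (q p) hqp
  let φ : A →ₗ[ℂ] ℂ := e.symm.toLinearMap ∘ₗ compress.codRestrict (ℂ ∙ q p) hrange
  have hφ : ∀ x, φ x • q p = compress x := fun x =>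
    congrArg Subtype.val (e.apply_symm_apply ⟨compress x, hrange x⟩)
  refine ⟨.mk₀ φ fun x hx => ?_, fun x => ?_⟩
  · obtain ⟨c, hc, hxc⟩ := hpos x hx
    rw [← hφ] at hxc
    rw [smul_left_injective ℂ hqp hxc]
    exact_mod_cast hc
  · rw [← hq, map_sub, map_smul, sub_eq_zero]
    exact (hφ x).symm

end MinimalProjection

section Representation

open scoped ComplexOrder InnerProductSpace

lemma finrank_lt_or_exists_orthonormal {𝕜 E F : Type*} [RCLike 𝕜] [NormedAddCommGroup E]
    [InnerProductSpace 𝕜 E] [AddCommGroup F] [Module 𝕜 F] {f : F →ₗ[𝕜] E} (hf : DenseRange f)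
    (k : ℕ) :
    (FiniteDimensional 𝕜 E ∧ Module.finrank 𝕜 E < k) ∨
      ∃ y : Fin k → F, Orthonormal 𝕜 fun i => f (y i) := by
  rcases lt_or_ge (Module.rank 𝕜 (LinearMap.range f)) k with hlt | hge
  · have hfin : FiniteDimensional 𝕜 (LinearMap.range f) :=
      Module.rank_lt_aleph0_iff.1 (hlt.trans Cardinal.natCast_lt_aleph0)
    have htop : LinearMap.range f = ⊤ := by
      have hclosed := Submodule.closed_of_finiteDimensional (LinearMap.range f)
      rw [← hclosed.submodule_topologicalClosure_eq]
      exact Submodule.dense_iff_topologicalClosure_eq_top.1 hf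
    rw [htop] at hfin hlt
    refine .inl ⟨Module.Finite.equiv Submodule.topEquiv, ?_⟩
    rw [← finrank_top]
    exact Module.finrank_lt_of_rank_lt hlt
  · obtain ⟨v, hv⟩ := natCast_le_rank_iff.1 hge
    choose y hy using fun i => (InnerProductSpace.gramSchmidtNormed 𝕜 v i).2
    refine .inr ⟨y, ?_⟩
    simp only [hy]
    exact (InnerProductSpace.gramSchmidtNormed_orthonormal hv).comp_linearIsometry
      (LinearMap.range f).subtypeₗᵢ

lemma exists_matrix_representation_ne_zero {A E : Type*} [Semiring A] [Algebra ℂ A] [Star A]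
    [NormedAddCommGroup E] [InnerProductSpace ℂ E] [CompleteSpace E] [FiniteDimensional ℂ E]
    [Nontrivial E] (π : A →⋆ₐ[ℂ] (E →L[ℂ] E)) :
    ∃ ρ : A →⋆ₙₐ[ℂ] Matrix (Fin (Module.finrank ℂ E)) (Fin (Module.finrank ℂ E)) ℂ, ρ 1 ≠ 0 := by
  let e := (stdOrthonormalBasis ℂ E).repr.conjStarAlgEquiv.trans Matrix.toEuclideanCLM.symm
  refine ⟨(e : (E →L[ℂ] E) →⋆ₙₐ[ℂ] _).comp (π : A →⋆ₙₐ[ℂ] (E →L[ℂ] E)), ?_⟩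
  have : Nonempty (Fin (Module.finrank ℂ E)) := Fin.pos_iff_nonempty.1 Module.finrank_pos
  simp

variable {A : Type*} [CStarAlgebra A] [PartialOrder A] [StarOrderedRing A]
  {M : MaximalTwoSidedIdeal A} {p : A}

lemma IsMinimalProjection.rankGE_of_orthonormal (hp : IsMinimalProjection M p) {φ : A →ₚ[ℂ] ℂ}
    (hφ : ∀ x, p * x * p - φ x • p ∈ M.1) {k : ℕ} {y : Fin k → φ.PreGNS} (hy : Orthonormal ℂ y) :
    RankGE k 1 M := by
  let b i := φ.ofPreGNS (y i)
  have hinner : ∀ i j, φ (star (b i) * b j) = ⟪y i, y j⟫_ℂ := fun i j =>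
    (φ.preGNS_inner_def _ _).symm
  have hprod : ∀ i j,
      p * star (b i) * 1 * star (p * star (b j) * 1) = p * (star (b i) * b j) * p := fun i j => by
    simp only [mul_one, star_mul, star_star, (IsSelfAdjoint.of_nonneg hp.nonneg).star_eq, mul_assoc]
  refine rankGE_of_mul_star_mem (x := fun i => p * star (b i)) (fun i j hij => ?_) fun i hi => ?_
  · beta_reduce
    rw [hprod]
    simpa only [hinner, hy.2 hij, zero_smul, sub_zero] using hφ (star (b i) * b j)
  · have hmem := M.1.mul_mem_right _ (star (p * star (b i) * 1)) hi
    rw [hprod] at hmem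
    have hsub := hφ (star (b i) * b i)
    rw [hinner, inner_self_eq_norm_sq_to_K, hy.1 i] at hsub
    simp only [RCLike.ofReal_one, one_pow, one_smul] at hsub
    exact hp.notMem (by simpa only [sub_sub_cancel] using M.1.sub_mem hmem hsub)

lemma IsMinimalProjection.nontrivial_gns (hp : IsMinimalProjection M p) {φ : A →ₚ[ℂ] ℂ}
    (hφ : ∀ x, p * x * p - φ x • p ∈ M.1) : Nontrivial φ.GNS := by
  refine ⟨⟨(φ.toPreGNS 1 : φ.PreGNS), 0, fun h => hp.notMem ?_⟩⟩
  have hφ1 : φ 1 = 0 := by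
    have hnorm : ‖φ.toPreGNS 1‖ = 0 := by
      rw [← UniformSpace.Completion.norm_coe, h, norm_zero]
    simpa [hnorm] using (φ.preGNS_norm_sq (φ.toPreGNS 1)).symm
  have hsq : p * p ∈ M.1 := by simpa only [mul_one, hφ1, zero_smul, sub_zero] using hφ 1
  simpa only [sub_sub_cancel] using M.1.sub_mem hsq hp.mul_self_sub_mem

theorem rankGE_one_of_forall_representation_eq_zero {k : ℕ}
    (h : ∀ j, 1 ≤ j → j < k → ∀ φ : A →⋆ₙₐ[ℂ] Matrix (Fin j) (Fin j) ℂ, ∀ a, φ a = 0)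
    (M : MaximalTwoSidedIdeal A) : RankGE k 1 M := by
  by_contra hrank
  obtain ⟨p, hp⟩ := exists_isMinimalProjection hrank
  obtain ⟨φ, hφ⟩ := hp.exists_positiveLinearMap
  have := hp.nontrivial_gns hφ
  rcases finrank_lt_or_exists_orthonormal
    (f := (UniformSpace.Completion.toComplₗᵢ (𝕜 := ℂ) (E := φ.PreGNS)).toLinearMap)
    UniformSpace.Completion.denseRange_coe k with ⟨hfin, hlt⟩ | ⟨y, hy⟩
  · obtain ⟨ρ, hρ⟩ := exists_matrix_representation_ne_zero φ.gnsStarAlgHom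
    exact hρ (h _ Module.finrank_pos hlt ρ 1)
  · exact hrank (hp.rankGE_of_orthonormal hφ ((LinearIsometry.orthonormal_comp_iff _).1 hy))

end Representation

section MatrixUnits

lemma rankGE_one_left_iff {A : Type*} [CStarAlgebra A] {d : A} {M : MaximalTwoSidedIdeal A} :
    RankGE 1 d M ↔ d ∉ M.1 :=
  ⟨fun ⟨x, _, hx⟩ hd => hx 0 (M.1.mul_mem_left _ _ hd),
    fun hd => ⟨1, fun i j hij => (hij (Subsingleton.elim i j)).elim, fun _ => by simpa using hd⟩⟩

variable {A : Type*} [CStarAlgebra A] [PartialOrder A] [StarOrderedRing A]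

lemma exists_forall_mul_mul_notMem (hsr1 : Dense {a : A | IsUnit a}) {a b : A}
    (ha : ∀ M : MaximalTwoSidedIdeal A, a ∉ M.1) (hb : ∀ M : MaximalTwoSidedIdeal A, b ∉ M.1) :
    ∃ x, ∀ M : MaximalTwoSidedIdeal A, a * x * b ∉ M.1 := by
  obtain ⟨_, ⟨x, rfl⟩, hx⟩ := exists_mem_forall_rankGE hsr1 (L := range fun x => a * x * b) (m := 1)
    ⟨0, by simp⟩
    (by
      rintro _ ⟨x₁, rfl⟩ _ ⟨x₂, rfl⟩ u v
      exact ⟨x₂ + (x₁ * b * u + x₂ * b * v) * a * x₁, by noncomm_ring⟩)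
    fun M => by
      obtain ⟨x, hx⟩ := M.exists_mul_mul_notMem (ha M) (hb M)
      exact ⟨_, ⟨x, rfl⟩, rankGE_one_left_iff.2 hx⟩
  exact ⟨x, fun M => rankGE_one_left_iff.1 (hx M)⟩

lemma exists_full_forall_eq_mul_mul (hsr1 : Dense {a : A | IsUnit a}) {ι : Type*} {c : ι → A}
    (hc : ∀ i, ∀ M : MaximalTwoSidedIdeal A, c i ∉ M.1) (s : Finset ι) :
    ∃ d, (∀ M : MaximalTwoSidedIdeal A, d ∉ M.1) ∧ ∀ i ∈ s, ∃ w x, d = w * c i * x := by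
  classical
  induction s using Finset.induction_on with
  | empty => exact ⟨1, fun M => M.one_notMem, by simp⟩
  | insert i s _ ih =>
    obtain ⟨d, hd, hfac⟩ := ih
    obtain ⟨y, hy⟩ := exists_forall_mul_mul_notMem hsr1 (hc i) hd
    refine ⟨c i * y * d, hy, Finset.forall_mem_insert _ _ _ |>.2 ⟨⟨1, y * d, ?_⟩, fun j hj => ?_⟩⟩
    · rw [one_mul, mul_assoc]
    · obtain ⟨w, x, rfl⟩ := hfac j hj
      exact ⟨c i * y * w, x, by noncomm_ring⟩

lemma mul_eq_zero_of_mul_self_mul_mul_self_eq_zero {A : Type*} [NonUnitalNormedRing A] [StarRing A]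
    [CStarRing A] {a b : A} (ha : IsSelfAdjoint a) (hb : IsSelfAdjoint b)
    (h : a * a * (b * b) = 0) : a * b = 0 := by
  have habb : a * b * b = 0 := by
    rw [← CStarRing.star_mul_self_eq_zero_iff]
    simp only [star_mul, ha.star_eq, hb.star_eq]
    calc b * (b * a) * (a * b * b) = b * b * (a * a * (b * b)) := by noncomm_ring
      _ = 0 := by rw [h, mul_zero]
  rw [← CStarRing.mul_star_self_eq_zero_iff, star_mul, ha.star_eq, hb.star_eq, ← mul_assoc, habb,
    zero_mul]

lemma abs_mul_abs_eq_zero_of_mul_star_eq_zero {a b : A} (h : a * star b = 0) :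
    CFC.abs a * CFC.abs b = 0 := by
  refine mul_eq_zero_of_mul_self_mul_mul_self_eq_zero (CFC.abs_nonneg a).isSelfAdjoint
    (CFC.abs_nonneg b).isSelfAdjoint ?_
  rw [CFC.abs_mul_abs, CFC.abs_mul_abs, mul_assoc, ← mul_assoc a, h, zero_mul, mul_zero]

theorem exists_star_mul_eq_ite (hsr1 : Dense {a : A | IsUnit a}) {ι : Type*} [Finite ι]
    [DecidableEq ι] {c : ι → A} (hnonneg : ∀ i, 0 ≤ c i) (horth : Pairwise fun i j => c i * c j = 0)
    (hfull : ∀ i, ∀ M : MaximalTwoSidedIdeal A, c i ∉ M.1) :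
    ∃ (d : A) (v : ι → A), (∀ M : MaximalTwoSidedIdeal A, d ∉ M.1) ∧
      ∀ i j, star (v i) * v j = if i = j then star d * d else 0 := by
  cases nonempty_fintype ι
  obtain ⟨d, hd, hfac⟩ := exists_full_forall_eq_mul_mul hsr1 hfull Finset.univ
  choose w x hwx using fun i => hfac i (Finset.mem_univ i)
  have hexpand : ∀ i j, star (CFC.abs (w i * c i) * x i) * (CFC.abs (w j * c j) * x j) =
      star (x i) * (CFC.abs (w i * c i) * CFC.abs (w j * c j)) * x j := fun i j => by
    rw [star_mul, (CFC.abs_nonneg (w i * c i)).isSelfAdjoint.star_eq]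
    noncomm_ring
  refine ⟨d, fun i => CFC.abs (w i * c i) * x i, hd, fun i j => ?_⟩
  rw [hexpand]
  split_ifs with hij
  · subst hij
    rw [CFC.abs_mul_abs, hwx i, star_mul (w i * c i)]
    noncomm_ring
  · rw [abs_mul_abs_eq_zero_of_mul_star_eq_zero, mul_zero, zero_mul]
    rw [star_mul, (hnonneg j).isSelfAdjoint.star_eq, mul_assoc, ← mul_assoc (c i), horth hij,
      zero_mul, mul_zero]

end MatrixUnits

section MatrixHom

open scoped Matrix

variable {R ι A B : Type*} [CommSemiring R] [Fintype ι] [DecidableEq ι] [NonUnitalSemiring A]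
  [Module R A] [NonUnitalSemiring B] [Module R B]

lemma map_mul_diagonal_mul_map {ψ : B →ₗ[R] A} {h : A}
    (hmul : ∀ f g, ψ f * h * ψ g = ψ (f * g)) (X Y : Matrix ι ι B) :
    X.map ψ * Matrix.diagonal (fun _ => h) * Y.map ψ = (X * Y).map ψ := by
  ext i j
  rw [Matrix.mul_apply, Matrix.map_apply, Matrix.mul_apply, map_sum]
  simp only [Matrix.mul_diagonal, Matrix.map_apply, hmul]

variable [StarRing A] [StarRing B] [IsScalarTower R A A] [SMulCommClass R A A]

/-- The homomorphism `X ↦ ∑ i j, v i * ψ (X i j) * star (v j)`, written as the product of the row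
`v`, the matrix `ψ(X)` and the column `star v`. It is multiplicative because
`star (v i) * v j` equals `h` or `0`, and `ψ f * h * ψ g = ψ (f * g)`. -/
noncomputable def matrixHomOfColumns (ψ : B →ₗ[R] A) (hstar : ∀ f, ψ (star f) = star (ψ f)) {h : A}
    (hmul : ∀ f g, ψ f * h * ψ g = ψ (f * g)) (v : ι → A)
    (hv : ∀ i j, star (v i) * v j = if i = j then h else 0) : Matrix ι ι B →⋆ₙₐ[R] A where
  toFun X := (Matrix.replicateRow Unit v * X.map ψ * (Matrix.replicateRow Unit v)ᴴ) () ()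
  map_smul' c X := by simp [Matrix.map_smul]
  map_zero' := by simp
  map_add' X Y := by simp [Matrix.map_add, Matrix.mul_add, Matrix.add_mul]
  map_mul' X Y := by
    have hgram : (Matrix.replicateRow Unit v)ᴴ * Matrix.replicateRow Unit v =
        Matrix.diagonal fun _ => h := by
      ext i j
      simp [Matrix.mul_apply, hv, Matrix.diagonal_apply]
    have hunit : ∀ P Q : Matrix Unit Unit A, P () () * Q () () = (P * Q) () () := fun P Q => by
      simp [Matrix.mul_apply]
    rw [← map_mul_diagonal_mul_map hmul, ← hgram, hunit]
    simp only [Matrix.mul_assoc]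
  map_star' X := by
    have hstarMap : (star X).map ψ = (X.map ψ)ᴴ := by
      ext i j
      simp [hstar]
    rw [hstarMap, ← Matrix.conjTranspose_apply]
    simp only [Matrix.conjTranspose_mul, Matrix.conjTranspose_conjTranspose, Matrix.mul_assoc]

lemma matrixHomOfColumns_single (ψ : B →ₗ[R] A) (hstar : ∀ f, ψ (star f) = star (ψ f)) {h : A}
    (hmul : ∀ f g, ψ f * h * ψ g = ψ (f * g)) (v : ι → A)
    (hv : ∀ i j, star (v i) * v j = if i = j then h else 0) (i : ι) (f : B) :
    matrixHomOfColumns ψ hstar hmul v hv (Matrix.single i i f) = v i * ψ f * star (v i) := by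
  change (Matrix.replicateRow Unit v * (Matrix.single i i f).map ψ *
    (Matrix.replicateRow Unit v)ᴴ) () () = _
  simp [Matrix.mul_apply, Matrix.single_apply, ite_and]

end MatrixHom

section Cone

/-- Extends `f ∈ C₀((0,1])` to the line, by `0` on `(-∞, 0]` and by `f 1` on `[1, ∞)`, so that `f`
can be fed to the functional calculus of any positive element, contractive or not. -/
noncomputable def coneExtend (f : C₀(Ioc (0 : ℝ) 1, ℂ)) (t : ℝ) : ℂ :=
  if h : 0 < t then f ⟨min t 1, lt_min h one_pos, min_le_right _ _⟩ else 0

lemma coneExtend_of_nonpos (f : C₀(Ioc (0 : ℝ) 1, ℂ)) {t : ℝ} (ht : t ≤ 0) : coneExtend f t = 0 :=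
  dif_neg ht.not_gt

lemma continuousAt_coneExtend_of_nonpos (f : C₀(Ioc (0 : ℝ) 1, ℂ)) {t : ℝ} (ht : t ≤ 0) :
    ContinuousAt (coneExtend f) t := by
  rw [ContinuousAt, coneExtend_of_nonpos f ht]
  intro U hU
  obtain ⟨K, hK, hKU⟩ := mem_cocompact.1 (f.zero_at_infty' hU)
  have hclosed : IsClosed (Subtype.val '' K) := (hK.image continuous_subtype_val).isClosed
  have hmem : (fun s : ℝ => min s 1) ⁻¹' (Subtype.val '' K)ᶜ ∈ 𝓝 t := by
    refine (hclosed.isOpen_compl.preimage (by fun_prop)).mem_nhds ?_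
    rintro ⟨x, -, hx⟩
    exact ((min_le_left t 1).trans ht).not_gt (hx.symm ▸ x.2.1 : 0 < (fun s : ℝ => min s 1) t)
  rw [mem_map]
  filter_upwards [hmem] with s hs
  rcases lt_or_ge 0 s with hpos | hnonpos
  · rw [mem_preimage, coneExtend, dif_pos hpos]
    exact hKU fun hmemK => hs ⟨_, hmemK, rfl⟩
  · rw [mem_preimage, coneExtend_of_nonpos f hnonpos]
    exact mem_of_mem_nhds hU

@[fun_prop]
lemma continuous_coneExtend (f : C₀(Ioc (0 : ℝ) 1, ℂ)) : Continuous (coneExtend f) := by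
  refine continuous_iff_continuousAt.2 fun t => (lt_or_ge 0 t).elim (fun ht => ?_)
    (continuousAt_coneExtend_of_nonpos f)
  suffices ContinuousOn (coneExtend f) (Ioi 0) from this.continuousAt (Ioi_mem_nhds ht)
  rw [continuousOn_iff_continuous_domRestrict]
  have hrestrict : (Ioi (0 : ℝ)).domRestrict (coneExtend f) = fun s : Ioi (0 : ℝ) =>
      f ⟨min s 1, lt_min s.2 one_pos, min_le_right _ _⟩ := funext fun s => dif_pos s.2
  rw [hrestrict]
  fun_prop

variable {A : Type*} [CStarAlgebra A] {ε : ℝ}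

lemma continuous_coneExtend_cutDown_mul_truncInv (hε : 0 < ε) (f : C₀(Ioc (0 : ℝ) 1, ℂ)) :
    Continuous fun s : ℂ => coneExtend f (cutDown ε s.re) * (truncInv ε s.re : ℂ) := by
  have := continuous_truncInv hε
  fun_prop

/-- The functional calculus `f ↦ f((h - ε)₊) h⁻¹`, where `h⁻¹` is truncated below `ε` and is
hence a true inverse on the support of `(h - ε)₊`. -/
noncomputable def coneCalculus (hε : 0 < ε) (h : A) : C₀(Ioc (0 : ℝ) 1, ℂ) →ₗ[ℂ] A where
  toFun f := cfc (fun s : ℂ => coneExtend f (cutDown ε s.re) * (truncInv ε s.re : ℂ)) h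
  map_add' f g := by
    rw [← cfc_add _ _ _ (continuous_coneExtend_cutDown_mul_truncInv hε f).continuousOn
      (continuous_coneExtend_cutDown_mul_truncInv hε g).continuousOn]
    congr 1 with s
    unfold coneExtend
    split_ifs <;> simp [add_mul]
  map_smul' c f := by
    rw [RingHom.id_apply,
      ← cfc_smul c _ _ (continuous_coneExtend_cutDown_mul_truncInv hε f).continuousOn]
    congr 1 with s
    unfold coneExtend
    split_ifs <;> simp [mul_assoc]

lemma coneCalculus_star (hε : 0 < ε) (h : A) (f : C₀(Ioc (0 : ℝ) 1, ℂ)) :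
    coneCalculus hε h (star f) = star (coneCalculus hε h f) := by
  change cfc _ h = star (cfc _ h)
  rw [← cfc_star]
  congr 1 with s
  unfold coneExtend
  split_ifs <;> simp

lemma coneExtend_cutDown_mul_truncInv_mul (hε : 0 < ε) (f : C₀(Ioc (0 : ℝ) 1, ℂ)) (t : ℝ) :
    coneExtend f (cutDown ε t) * (truncInv ε t : ℂ) * t = coneExtend f (cutDown ε t) := by
  rcases le_total t ε with ht | ht
  · rw [cutDown_of_le ht, coneExtend_of_nonpos f le_rfl, zero_mul, zero_mul]
  · rw [mul_assoc, ← Complex.ofReal_mul, truncInv_mul_self hε ht, Complex.ofReal_one, mul_one]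

lemma coneCalculus_mul_mul_coneCalculus (hε : 0 < ε) {h : A} (hh : IsSelfAdjoint h)
    (f g : C₀(Ioc (0 : ℝ) 1, ℂ)) :
    coneCalculus hε h f * h * coneCalculus hε h g = coneCalculus hε h (f * g) := by
  have hcf := continuous_coneExtend_cutDown_mul_truncInv hε f
  have hcg := continuous_coneExtend_cutDown_mul_truncInv hε g
  have hnormal : IsStarNormal h := hh.isStarNormal
  change cfc _ h * h * cfc _ h = cfc _ h
  conv_lhs => enter [1, 2]; rw [← cfc_id' ℂ h]
  rw [← cfc_mul _ _ h hcf.continuousOn (by fun_prop),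
    ← cfc_mul _ _ h (Continuous.continuousOn (by fun_prop)) hcg.continuousOn]
  refine cfc_congr fun s hs => ?_
  have hre := coneExtend_cutDown_mul_truncInv_mul hε f s.re
  rw [← hh.mem_spectrum_eq_re hs] at hre
  rw [hre, ← mul_assoc]
  congr 1
  unfold coneExtend
  split_ifs <;> simp

/-- The generator `t ↦ t` of `C₀((0,1])`. -/
noncomputable def coneId : C₀(Ioc (0 : ℝ) 1, ℂ) where
  toFun t := (t : ℝ)
  continuous_toFun := by fun_prop
  zero_at_infty' := by
    refine Metric.tendsto_nhds.2 fun δ hδ => mem_cocompact.2 ⟨{t | δ ≤ (t : ℝ)}, ?_, fun t ht => ?_⟩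
    · have himage : Subtype.val '' {t : Ioc (0 : ℝ) 1 | δ ≤ (t : ℝ)} = Icc δ 1 := by
        ext t
        exact ⟨fun ⟨x, hx, hxt⟩ => hxt ▸ ⟨hx, x.2.2⟩,
          fun ht => ⟨⟨t, hδ.trans_le ht.1, ht.2⟩, ht.1, rfl⟩⟩
      rw [Subtype.isCompact_iff, himage]
      exact isCompact_Icc
    · simpa [abs_of_pos t.2.1] using ht

lemma coneExtend_coneId {t : ℝ} (ht : 0 ≤ t) : coneExtend coneId t = (min t 1 : ℝ) := by
  rcases ht.eq_or_lt with rfl | hpos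
  · simp [coneExtend_of_nonpos]
  · exact dif_pos hpos

lemma coneCalculus_coneId (hε : 0 < ε) {h : A} (hh : IsSelfAdjoint h) :
    coneCalculus hε h coneId = cfc (fun t => min (cutDown ε t) 1 * truncInv ε t) h := by
  rw [cfc_real_eq_complex _ hh]
  change cfc _ h = _
  congr 1 with s
  rw [coneExtend_coneId (cutDown_nonneg _ _), Complex.ofReal_mul]

lemma truncInv_mul_max_mul_self_mul_min_mul_self (hε : 0 < ε) (t : ℝ) :
    truncInv ε t * max 1 (cutDown ε t) * (t * (min (cutDown ε t) 1 * truncInv ε t) * t) =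
      cutDown ε t := by
  have hinv := truncInv_mul_self_mul_cutDown hε t
  have hmaxmin : max 1 (cutDown ε t) * min (cutDown ε t) 1 = cutDown ε t := by
    rw [min_comm, max_mul_min, one_mul]
  calc _ = truncInv ε t * t * (truncInv ε t * t * (max 1 (cutDown ε t) * min (cutDown ε t) 1)) := by
        ring
    _ = cutDown ε t := by rw [hmaxmin, hinv, hinv]

lemma cfc_cutDown_mem_of_mul_coneCalculus_mul_mem (hε : 0 < ε) {h : A} (hh : IsSelfAdjoint h)
    {I : TwoSidedIdeal A} (hmem : h * coneCalculus hε h coneId * h ∈ I) :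
    cfc (cutDown ε) h ∈ I := by
  have hcont := continuous_truncInv hε
  have hfactor : cfc (fun t => truncInv ε t * max 1 (cutDown ε t)) h *
      (h * coneCalculus hε h coneId * h) = cfc (cutDown ε) h := by
    rw [coneCalculus_coneId hε hh, self_mul_cfc (by fun_prop) hh, cfc_mul_self (by fun_prop) hh,
      cfc_mul_cfc (by fun_prop) (by fun_prop)]
    simp only [truncInv_mul_max_mul_self_mul_min_mul_self hε]
  exact hfactor ▸ I.mul_mem_left _ _ hmem

end Cone

section FullHom

variable {A : Type*} [CStarAlgebra A] [PartialOrder A] [StarOrderedRing A] {k : ℕ}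

theorem exists_full_matrix_cone_hom (hsr1 : Dense {a : A | IsUnit a}) (hk : 1 ≤ k)
    (hrank : ∀ M : MaximalTwoSidedIdeal A, RankGE k 1 M) :
    ∃ φ : Matrix (Fin k) (Fin k) C₀(Ioc (0 : ℝ) 1, ℂ) →⋆ₙₐ[ℂ] A,
      ∀ I : TwoSidedIdeal A, (∀ x, φ x ∈ I) → 1 ∈ I := by
  obtain ⟨c, hnonneg, horth, hfull, -⟩ := exists_pairwise_orthogonal_full hsr1 hrank
  obtain ⟨d, v, hd, hv⟩ := exists_star_mul_eq_ite hsr1 hnonneg horth hfull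
  obtain ⟨ε, hε, hcut⟩ := exists_forall_rankGE_cfc_cutDown fun M => rankGE_one_left_iff.2 (hd M)
  have hh := IsSelfAdjoint.star_mul_self d
  refine ⟨matrixHomOfColumns (coneCalculus hε (star d * d)) (coneCalculus_star hε _)
    (coneCalculus_mul_mul_coneCalculus hε hh) v hv, fun I hI => ?_⟩
  by_contra hone
  obtain ⟨M, hIM⟩ := exists_maximalTwoSidedIdeal_ge hone
  refine rankGE_one_left_iff.1 (hcut M) (cfc_cutDown_mem_of_mul_coneCalculus_mul_mem hε hh ?_)
  let i : Fin k := ⟨0, hk⟩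
  have hmem := hIM (hI (Matrix.single i i coneId))
  rw [matrixHomOfColumns_single] at hmem
  have hii : star (v i) * v i = star d * d := (hv i i).trans (if_pos rfl)
  have hconj := M.1.mul_mem_right _ (v i) (M.1.mul_mem_left (star (v i)) _ hmem)
  simpa only [← hii, mul_assoc] using hconj

end FullHom

section FullHomObstruction

variable {ι m n : Type*} [Fintype ι]

open scoped Matrix ComplexOrder in
lemma matrix_eq_zero_of_conjTranspose_mul_eq_ite [Fintype m] [Finite n] [DecidableEq ι]
    (hcard : Fintype.card m < Fintype.card ι) {X : ι → Matrix m n ℂ} {H : Matrix n n ℂ}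
    (hX : ∀ i j, (X i)ᴴ * X j = if i = j then H else 0) (i : ι) : X i = 0 := by
  classical
  cases nonempty_fintype n
  suffices hH : H = 0 by
    rw [← Matrix.conjTranspose_mul_self_eq_zero, hX, if_pos rfl, hH]
  refine Matrix.ext_of_mulVec_single fun l => ?_
  rw [Matrix.zero_mulVec]
  by_contra hne
  set ξ : n → ℂ := Pi.single l 1
  have hindep : LinearIndependent ℂ fun i => X i *ᵥ ξ := by
    refine Fintype.linearIndependent_iff.2 fun g hg i => ?_
    have hi := congrArg ((X i)ᴴ *ᵥ ·) hg
    simp only [Matrix.mulVec_sum, Matrix.mulVec_smul, Matrix.mulVec_mulVec, hX,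
      Matrix.mulVec_zero] at hi
    rw [Finset.sum_eq_single i (fun j _ hji => by simp [hji.symm]) (by simp), if_pos rfl] at hi
    exact (smul_eq_zero.1 hi).resolve_right hne
  have := hindep.fintype_card_le_finrank
  rw [Module.finrank_fintype_fun_eq_card] at this
  exact this.not_gt hcard

lemma hom_matrix_eq_zero_of_card_lt [Fintype n] {B : Type*} [NonUnitalSemiring B] [StarRing B]
    [Module ℂ B] (hcard : Fintype.card n < Fintype.card ι)
    (θ : Matrix ι ι B →⋆ₙₐ[ℂ] Matrix n n ℂ) (X : Matrix ι ι B) : θ X = 0 := by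
  classical
  have hsingle : ∀ i l f, θ (Matrix.single i l f) = 0 := fun i l f => by
    refine matrix_eq_zero_of_conjTranspose_mul_eq_ite hcard
      (X := fun i => θ (Matrix.single i l f)) (H := θ (Matrix.single l l (star f * f)))
      (fun i j => ?_) i
    rw [← Matrix.star_eq_conjTranspose, ← map_star, ← map_mul, Matrix.star_eq_conjTranspose,
      Matrix.conjTranspose_single]
    split_ifs with hij
    · rw [hij, Matrix.single_mul_single_same]
    · rw [Matrix.single_mul_single_of_ne _ _ _ _ hij, map_zero]
  rw [Matrix.matrix_eq_sum_single X]
  simp only [map_sum, hsingle, Finset.sum_const_zero]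

lemma representation_eq_zero_of_full_hom {A B : Type*} [CStarAlgebra A] [NonUnitalSemiring B]
    [StarRing B] [Module ℂ B] [Fintype n] {φ : Matrix ι ι B →⋆ₙₐ[ℂ] A}
    (hφ : ∀ I : TwoSidedIdeal A, IsClosed (I : Set A) → (∀ x, φ x ∈ I) → ∀ a, a ∈ I)
    (hcard : Fintype.card n < Fintype.card ι) (π : A →⋆ₙₐ[ℂ] Matrix n n ℂ) (a : A) : π a = 0 := by
  let K := TwoSidedIdeal.ker π
  have hφK : ∀ x, φ x ∈ K := fun x =>
    (TwoSidedIdeal.mem_ker _).2 (hom_matrix_eq_zero_of_card_lt hcard (π.comp φ) x)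
  have hone : (1 : A) ∈ K := by
    by_contra hone
    refine one_notMem_closure hone ?_
    simpa [closureTwoSidedIdeal] using hφ (closureTwoSidedIdeal K)
      (by simp [closureTwoSidedIdeal]) (fun x => by
        simpa [closureTwoSidedIdeal] using subset_closure (hφK x)) 1
  exact (TwoSidedIdeal.mem_ker _).1 (by simpa only [mul_one] using K.mul_mem_left a 1 hone)

end FullHomObstruction

theorem glimm_halving_separable_unital_stableRankOne_general
    {A : Type*} [CStarAlgebra A] (hsr1 : Dense {a : A | IsUnit a}) (k : ℕ) (hk : 1 ≤ k) :
    (∀ (j : ℕ), 1 ≤ j → j < k →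
        ∀ φ : A →⋆ₙₐ[ℂ] Matrix (Fin j) (Fin j) ℂ, ∀ a : A, φ a = 0) ↔
      ∃ φ : Matrix (Fin k) (Fin k) C₀(↥(Set.Ioc (0:ℝ) 1), ℂ) →⋆ₙₐ[ℂ] A,
        ∀ I : TwoSidedIdeal A, IsClosed (I : Set A) →
          (∀ x, φ x ∈ I) → ∀ a : A, a ∈ I := by
  refine ⟨fun hrep => ?_, fun ⟨φ, hφ⟩ j _ hjk π a =>
    representation_eq_zero_of_full_hom hφ (by simpa using hjk) π a⟩
  let := CStarAlgebra.spectralOrder A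
  have := CStarAlgebra.spectralOrderedRing A
  obtain ⟨φ, hφ⟩ :=
    exists_full_matrix_cone_hom hsr1 hk (rankGE_one_of_forall_representation_eq_zero hrep)
  exact ⟨φ, fun I _ hI a => by simpa only [mul_one] using I.mul_mem_left a 1 (hφ I hI)⟩

/-- **Global Glimm halving for separable unital C*-algebras of stable rank one.**
A separable unital C*-algebra `A` of stable rank one has no nonzero representation of
dimension less than `k` if and only if there is a *-homomorphism from
`M_k(C₀((0,1]))` into `A` with full range. -/
theorem glimm_halving_separable_unital_stableRankOne
    {A : Type*} [CStarAlgebra A] [TopologicalSpace.SeparableSpace A]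
    (hsr1 : Dense {a : A | IsUnit a})
    (k : ℕ) (hk : 1 ≤ k) :
    (∀ (j : ℕ), 1 ≤ j → j < k →
        ∀ φ : A →⋆ₙₐ[ℂ] Matrix (Fin j) (Fin j) ℂ, ∀ a : A, φ a = 0) ↔
      ∃ φ : Matrix (Fin k) (Fin k) C₀(↥(Set.Ioc (0:ℝ) 1), ℂ) →⋆ₙₐ[ℂ] A,
        ∀ I : TwoSidedIdeal A, IsClosed (I : Set A) →
          (∀ x, φ x ∈ I) → ∀ a : A, a ∈ I := by
  exact glimm_halving_separable_unital_stableRankOne_general hsr1 k hk
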